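/- arXiv:2409.13553 — 2 statements merged into one kernel-verified Lean document; each statement's English description precedes it below -/
import Mathlib

section
/- Let F be an infinite field, let u > r ≥ 2 be integers, and let 1 ≤ k ≤ r−1 and 1 ≤ l ≤ u−r. Let P be a partition whose Burge code is α^{u−r−l} β^{l} α^{r−k} β^{k} α. Then the Zariski closure in F^N of the set W^Q_{k,l} = { x ∈ F^N : the Jordan type of M_x equals P } is exactly the zero locus X^Q_{k,l} of the set of polynomials E^Q_{k,l}. -/
open Polynomial

noncomputable section

/-- The quotient module `F[t]/(t^m)`. -/
abbrev PQ (F : Type*) [Field F] (m : ℕ) : Type _ := F[X] ⧸ Ideal.span {(X : F[X]) ^ m}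

variable (F : Type*) [Field F]

lemma mulQ_cond (m m' : ℕ) (c : F[X]) (h : (X : F[X]) ^ m' ∣ c * X ^ m) :
    Ideal.span {(X : F[X]) ^ m} ≤
      Submodule.comap (LinearMap.mulLeft F[X] c) (Ideal.span {(X : F[X]) ^ m'}) := by
  rw [Ideal.span_le]
  intro x hx
  rw [Set.mem_singleton_iff] at hx
  subst hx
  simp only [SetLike.mem_coe, Submodule.mem_comap, LinearMap.mulLeft_apply]
  exact Ideal.mem_span_singleton.mpr h

/-- The `F`-linear map `F[t]/(t^m) → F[t]/(t^{m'})` induced by multiplication by the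
polynomial `c`, well-defined whenever `t^{m'} ∣ c · t^m`. -/
def mulQ (m m' : ℕ) (c : F[X]) (h : (X : F[X]) ^ m' ∣ c * X ^ m) :
    PQ F m →ₗ[F] PQ F m' :=
  LinearMap.restrictScalars F
    (Submodule.mapQ (Ideal.span {(X : F[X]) ^ m}) (Ideal.span {(X : F[X]) ^ m'})
      (LinearMap.mulLeft F[X] c) (mulQ_cond F m m' c h))

lemma dvd_A (u : ℕ) (c : F[X]) : (X : F[X]) ^ u ∣ c * X ^ u := Dvd.intro c (mul_comm _ _)

lemma dvd_G (u r : ℕ) (hru : r ≤ u) (g : F[X]) :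
    (X : F[X]) ^ u ∣ (X ^ r * g) * X ^ (u - r) := by
  refine Dvd.intro g ?_
  rw [mul_comm ((X:F[X])^r) g, mul_assoc, ← pow_add, Nat.add_sub_cancel' hru, mul_comm]

lemma dvd_H (u r : ℕ) (h : F[X]) : (X : F[X]) ^ (u - r) ∣ h * X ^ u :=
  Dvd.dvd.mul_left (pow_dvd_pow _ (Nat.sub_le u r)) h

/-- The `F[t]`-module endomorphism of `V = F[t]/(t^u) ⊕ t^r·F[t]/(t^u)` given by
`M(v₁, v₂) = (a v₁ + g v₂, h t^r v₁ + b v₂)`, where the second summand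
`t^r·F[t]/(t^u)` is identified with `F[t]/(t^{u-r})` via `w ↦ t^r w`
(so the lower-left entry becomes `v₁ ↦ h v₁ mod t^{u-r}` and the upper-right
entry becomes `w ↦ t^r g w mod t^u`). -/
def Mmap (u r : ℕ) (hru : r ≤ u) (a g h b : F[X]) :
    (PQ F u × PQ F (u - r)) →ₗ[F] (PQ F u × PQ F (u - r)) :=
  LinearMap.prod
    ((mulQ F u u a (dvd_A F u a)).comp (LinearMap.fst F (PQ F u) (PQ F (u - r))) +
      (mulQ F (u - r) u (X ^ r * g) (dvd_G F u r hru g)).comp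
        (LinearMap.snd F (PQ F u) (PQ F (u - r))))
    ((mulQ F u (u - r) h (dvd_H F u r h)).comp (LinearMap.fst F (PQ F u) (PQ F (u - r))) +
      (mulQ F (u - r) (u - r) b (dvd_A F (u - r) b)).comp
        (LinearMap.snd F (PQ F u) (PQ F (u - r))))

/-- `B` has Jordan type `P` (a partition given as the multiset of its parts):
the corank of every power of `B` is the one prescribed by `P`, i.e.
`dim ker (B^s) = Σ_i min(pᵢ, s)` for all `s ≥ 0`. -/
def JordanTypeIs {V : Type*} [AddCommGroup V] [Module F V] (B : Module.End F V)
    (P : Multiset ℕ) : Prop :=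
  ∀ s : ℕ, Module.finrank F (LinearMap.ker (B ^ s)) = (P.map fun p => min p s).sum

/-- Index type for the `N = 4u-3r-2` coordinates
`(a_1,…,a_{u−1}, b_1,…,b_{u−r−1}, g_0,…,g_{u−r−1}, h_0,…,h_{u−r−1})`. -/
abbrev Vars (u r : ℕ) : Type := Fin (u - 1) ⊕ Fin (u - r - 1) ⊕ Fin (u - r) ⊕ Fin (u - r)

/-- `a = Σ_{i=1}^{u−1} a_i t^i`. -/
def paOf (u r : ℕ) (x : Vars u r → F) : F[X] :=
  ∑ i : Fin (u - 1), C (x (Sum.inl i)) * X ^ ((i : ℕ) + 1)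

/-- `b = Σ_{i=1}^{u−r−1} b_i t^i`. -/
def pbOf (u r : ℕ) (x : Vars u r → F) : F[X] :=
  ∑ i : Fin (u - r - 1), C (x (Sum.inr (Sum.inl i))) * X ^ ((i : ℕ) + 1)

/-- `g = Σ_{i=0}^{u−r−1} g_i t^i`. -/
def pgOf (u r : ℕ) (x : Vars u r → F) : F[X] :=
  ∑ i : Fin (u - r), C (x (Sum.inr (Sum.inr (Sum.inl i)))) * X ^ (i : ℕ)

/-- `h = Σ_{i=0}^{u−r−1} h_i t^i`. -/
def phOf (u r : ℕ) (x : Vars u r → F) : F[X] :=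
  ∑ i : Fin (u - r), C (x (Sum.inr (Sum.inr (Sum.inr i)))) * X ^ (i : ℕ)

/-- The nilpotent endomorphism `M_x` of `V` determined by the point `x ∈ F^N`. -/
def Mx (u r : ℕ) (hru : r ≤ u) (x : Vars u r → F) :
    Module.End F (PQ F u × PQ F (u - r)) :=
  Mmap F u r hru (paOf F u r x) (pgOf F u r x) (phOf F u r x) (pbOf F u r x)

/-- The variable `a_i` as a polynomial function on `F^N` (meaningful for `1 ≤ i ≤ u-1`). -/
def Av (u r : ℕ) (i : ℕ) : MvPolynomial (Vars u r) F :=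
  if h : i - 1 < u - 1 then MvPolynomial.X (Sum.inl ⟨i - 1, h⟩) else 0

/-- The variable `b_i` as a polynomial function on `F^N` (meaningful for `1 ≤ i ≤ u-r-1`). -/
def Bv (u r : ℕ) (i : ℕ) : MvPolynomial (Vars u r) F :=
  if h : i - 1 < u - r - 1 then MvPolynomial.X (Sum.inr (Sum.inl ⟨i - 1, h⟩)) else 0

/-- The variable `g_i` as a polynomial function on `F^N` (meaningful for `0 ≤ i ≤ u-r-1`). -/
def Gv (u r : ℕ) (i : ℕ) : MvPolynomial (Vars u r) F :=
  if h : i < u - r then MvPolynomial.X (Sum.inr (Sum.inr (Sum.inl ⟨i, h⟩))) else 0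

/-- The variable `h_i` as a polynomial function on `F^N` (meaningful for `0 ≤ i ≤ u-r-1`). -/
def Hv (u r : ℕ) (i : ℕ) : MvPolynomial (Vars u r) F :=
  if h : i < u - r then MvPolynomial.X (Sum.inr (Sum.inr (Sum.inr ⟨i, h⟩))) else 0

/-- The set of polynomials `E^Q_{k,l}` for `Q = (u, u-r)`:
`{a_1,…,a_{k−1}, b_1,…,b_{l−1}}` if `k+l ≤ r`, and
`{a_1,…,a_{k−1}, b_1,…,b_{r−k−1}}` together with the quadratic polynomials
`Σ_{j=0}^{m} a_{k+j} b_{r−k+m−j} − Σ_{j=0}^{m} g_j h_{m−j}` for `0 ≤ m ≤ k+l−r−1`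
if `k+l ≥ r+1`. -/
def Eset (u r k l : ℕ) : Set (MvPolynomial (Vars u r) F) :=
  if k + l ≤ r then
    {p | ∃ i, 1 ≤ i ∧ i ≤ k - 1 ∧ p = Av F u r i} ∪
      {p | ∃ i, 1 ≤ i ∧ i ≤ l - 1 ∧ p = Bv F u r i}
  else
    {p | ∃ i, 1 ≤ i ∧ i ≤ k - 1 ∧ p = Av F u r i} ∪
      {p | ∃ i, 1 ≤ i ∧ i ≤ r - k - 1 ∧ p = Bv F u r i} ∪
      {p | ∃ m, m ≤ k + l - r - 1 ∧ p =
        (∑ j ∈ Finset.range (m + 1), Av F u r (k + j) * Bv F u r (r - k + m - j)) -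
          (∑ j ∈ Finset.range (m + 1), Gv F u r j * Hv F u r (m - j))}

/-- The common zero locus in `F^N` of a set `T` of polynomials. -/
def zLocus (u r : ℕ) (T : Set (MvPolynomial (Vars u r) F)) : Set (Vars u r → F) :=
  {x | ∀ p ∈ T, MvPolynomial.eval x p = 0}

/-- `X^Q_{k,l}`, the common zero locus of `E^Q_{k,l}`. -/
def Xlocus (u r k l : ℕ) : Set (Vars u r → F) := zLocus F u r (Eset F u r k l)

/-- Zariski-closed subsets of `F^N`: common zero loci of sets of polynomials. -/
def IsZClosed (u r : ℕ) (S : Set (Vars u r → F)) : Prop :=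
  ∃ T : Set (MvPolynomial (Vars u r) F), S = zLocus F u r T

/-- The Zariski closure of a subset of `F^N`. -/
def zClosure (u r : ℕ) (S : Set (Vars u r → F)) : Set (Vars u r → F) :=
  ⋂₀ {C | IsZClosed F u r C ∧ S ⊆ C}

end

section Burge

/-- Scanning the frequency sequence `f` downward from `j`, forming backward pairs:
whenever `f j > 0` (and `j` has not been consumed by a previously formed pair),
put `j` in the set and consume the index `j - 1`. -/
def RsetGo (f : ℕ → ℕ) : ℕ → Finset ℕ
  | 0 => ∅
  | 1 => if 0 < f 1 then {1} else ∅
  | (j + 2) => if 0 < f (j + 2) then insert (j + 2) (RsetGo f j) else RsetGo f (j + 1)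

/-- The set `R(P)` of a partition `P` (given as the multiset of its parts, with
frequency sequence `j ↦ P.count j`); the scan starts at the largest part `P.sup`. -/
def Rset (P : Multiset ℕ) : Finset ℕ := RsetGo (fun j => P.count j) P.sup

/-- The partition `∂P`: for each `j ∈ R(P)` one copy of the part `j` is replaced by
`j - 1` (discarded when `j - 1 = 0`). -/
def dP (P : Multiset ℕ) : Multiset ℕ :=
  (P - (Rset P).val) + (((Rset P).val.map fun j => j - 1).filter fun j => 0 < j)

/-- Fuel-driven computation of the Burge code; `false` stands for `α`, `true` for `β`.
(The fuel `P.sum + 1` used in `burgeCode` always suffices, since `∂` strictly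
decreases the size of a nonempty partition.) -/
def burgeGo : ℕ → Multiset ℕ → List Bool
  | 0, _ => []
  | (n + 1), P =>
    if P = 0 then [false]
    else (if 1 ∈ Rset P then true else false) :: burgeGo n (dP P)

/-- The Burge code of the partition `P`: the word `w_1 ⋯ w_m` with `w_i = β` (`true`)
if `∂^{i-1} P` is in class `B` (i.e. `1 ∈ R(∂^{i-1}P)`) and `w_i = α` (`false`)
otherwise, where `m = min { i : ∂^{i-1} P = (0) }`. -/
def burgeCode (P : Multiset ℕ) : List Bool := burgeGo (P.sum + 1) P

/-- The almost rectangular partition `[m]^k` of `m` into `k` parts, each equal to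
`⌈m/k⌉` or `⌊m/k⌋`. -/
def arPart (m k : ℕ) : Multiset ℕ :=
  Multiset.replicate (m % k) (m / k + 1) + Multiset.replicate (k - m % k) (m / k)

/-- Greedy decomposition of a weakly decreasing list of parts into maximal
almost rectangular segments from the top (fuel-driven helper). -/
def greedyGo : ℕ → List ℕ → List (List ℕ)
  | 0, _ => []
  | _ + 1, [] => []
  | n + 1, p :: rest =>
    ((p :: rest).takeWhile fun q => decide (p ≤ q + 1)) ::
      greedyGo n ((p :: rest).dropWhile fun q => decide (p ≤ q + 1))

/-- The greedy decomposition of a weakly decreasing list of parts into maximal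
almost rectangular subpartitions from the top. -/
def greedy (l : List ℕ) : List (List ℕ) := greedyGo l.length l

end Burge

/-!
Write `v = u - r`, `e = min l (r - k)` and `ord` for the order of vanishing at `t = 0`. Comparing
`P` with `∂P` shows how a letter added in front of a Burge code changes the function
`s ↦ ∑ i, min (p i) s`, so the code of `P` determines the whole function: its value at `s ≥ 1` is
the minimum of `s (k + l)`, `v + c s` and `r + 2 v`, where `c s = min (s k) (r + (s - 2) e)` is
the generic order of the upper left entry of the `s`-th power of `(a, t^r g; h, b)`.

On the other hand `dim ker (M_x ^ s)` is the dimension of the cokernel of `M_x ^ s`, hence the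
largest `n` such that `t^n` divides the two by two minors of a presentation matrix of that
cokernel. These minors are `t^(r + 2 v)`, `det^s` for `det = a b - t^r g h`, and powers of `t`
times the entries of the `s`-th power of the matrix, so the Jordan type of `M_x` is read off the
orders of those entries and of `det`. If it is `P`, then letting `s` vary forces `ord a ≥ k`,
`ord b ≥ e` and `ord det ≥ k + l`, and these are the equations of `X^Q_{k,l}`.

Conversely, write `a = t^k a'`, `b = t^e b'`; the last condition becomes
`t^(k + l - r) ∣ a' b' - g h` if `k + l > r` and is void otherwise. A generic matrix satisfying it
has Jordan type `P`. Where `a'` is a unit the condition can be solved for `b'`, which exhibits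
these points as polynomial images of affine spaces. Every other point is a limit of such points
along a polynomial family which preserves the condition, such as those given by row and column
operations on `(a', g; h, b')`. Over an infinite field a polynomial function that vanishes
generically on such a family vanishes on it.
-/

/-! ### Burge codes and kernel dimensions -/

lemma mem_RsetGo_bounds (f : ℕ → ℕ) {n j : ℕ} (hj : j ∈ RsetGo f n) : 1 ≤ j ∧ j ≤ n := by
  induction n using Nat.strong_induction_on with
  | _ n ih =>
    match n with
    | 0 => simp [RsetGo] at hj
    | 1 =>
      simp only [RsetGo] at hj
      split_ifs at hj <;> simp_all
    | n + 2 =>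
      simp only [RsetGo] at hj
      split_ifs at hj
      · rcases Finset.mem_insert.1 hj with rfl | hj
        · omega
        · have := ih n (by omega) hj
          omega
      · have := ih (n + 1) (by omega) hj
        omega

lemma mem_RsetGo_iff (f : ℕ → ℕ) {n j : ℕ} (hj : 1 ≤ j) (hjn : j ≤ n) :
    j ∈ RsetGo f n ↔ 0 < f j ∧ j + 1 ∉ RsetGo f n := by
  have not_mem {m i : ℕ} (h : m < i) : i ∉ RsetGo f m := fun hi =>
    h.not_ge (mem_RsetGo_bounds f hi).2
  induction n using Nat.strong_induction_on with
  | _ n ih =>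
    match n with
    | 0 => omega
    | 1 =>
      obtain rfl : j = 1 := by omega
      simp only [RsetGo]
      split_ifs <;> simp_all
    | n + 2 =>
      simp only [RsetGo]
      split_ifs with h
      · rcases Nat.lt_or_ge n j with hnj | hnj
        · obtain rfl | rfl : j = n + 1 ∨ j = n + 2 := by omega
          · simp [not_mem]
          · simp [not_mem, h]
        · simpa [show j ≠ n + 2 by omega, show j ≠ n + 1 by omega] using ih n (by omega) hnj
      · rcases Nat.lt_or_ge (n + 1) j with hnj | hnj
        · obtain rfl : j = n + 2 := by omega
          simp [not_mem, h]
        · exact ih (n + 1) (by omega) hnj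

lemma one_le_of_mem_Rset {P : Multiset ℕ} {j : ℕ} (hj : j ∈ Rset P) : 1 ≤ j :=
  (mem_RsetGo_bounds _ hj).1

lemma mem_Rset_iff (P : Multiset ℕ) {j : ℕ} (hj : 1 ≤ j) :
    j ∈ Rset P ↔ 0 < P.count j ∧ j + 1 ∉ Rset P := by
  rcases Nat.lt_or_ge P.sup j with h | h
  · have hR : j ∉ Rset P := fun hj => h.not_ge (mem_RsetGo_bounds _ hj).2
    have hP : j ∉ P := fun hj => h.not_ge (Multiset.le_sup hj)
    simp [hR, hP]
  · exact mem_RsetGo_iff _ hj h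

lemma Rset_val_le (P : Multiset ℕ) : (Rset P).val ≤ P :=
  Multiset.le_iff_subset (Rset P).nodup |>.2 fun _ hj =>
    Multiset.count_pos.1 ((mem_Rset_iff P (one_le_of_mem_Rset hj)).1 hj).1

/-- The function `s ↦ dim ker B^s` of a nilpotent endomorphism `B` of Jordan type `P`. -/
def kernelFun (P : Multiset ℕ) (s : ℕ) : ℕ := (P.map fun p => min p s).sum

lemma kernelFun_zero_left (s : ℕ) : kernelFun 0 s = 0 := rfl

lemma kernelFun_cons (p : ℕ) (P : Multiset ℕ) (s : ℕ) :
    kernelFun (p ::ₘ P) s = min p s + kernelFun P s := by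
  simp [kernelFun]

lemma kernelFun_add (P P' : Multiset ℕ) (s : ℕ) :
    kernelFun (P + P') s = kernelFun P s + kernelFun P' s := by
  simp [kernelFun]

lemma kernelFun_zero_right (P : Multiset ℕ) : kernelFun P 0 = 0 := by
  simp [kernelFun]

lemma kernelFun_filter_pos (P : Multiset ℕ) (s : ℕ) :
    kernelFun (P.filter fun p => 0 < p) s = kernelFun P s := by
  induction P using Multiset.induction_on with
  | empty => rfl
  | cons p P ih =>
    rcases p.eq_zero_or_pos with rfl | hp
    · rw [Multiset.filter_cons_of_neg (p := (0 < ·)) _ (lt_irrefl 0), kernelFun_cons, ih,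
        Nat.zero_min, zero_add]
    · rw [Multiset.filter_cons_of_pos (p := (0 < ·)) _ hp, kernelFun_cons, kernelFun_cons, ih]

lemma kernelFun_eq_sum {P : Multiset ℕ} {s : ℕ} (h : P.sup ≤ s) : kernelFun P s = P.sum := by
  rw [kernelFun, Multiset.map_congr rfl fun p hp => min_eq_left ((Multiset.le_sup hp).trans h),
    Multiset.map_id']

lemma two_mul_kernelFun_succ (P : Multiset ℕ) (s : ℕ) :
    2 * kernelFun P (s + 1) = kernelFun P s + kernelFun P (s + 2) + P.count (s + 1) := by
  induction P using Multiset.induction_on with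
  | empty => rfl
  | cons p P ih =>
    simp only [kernelFun_cons, Multiset.count_cons]
    split_ifs <;> omega

/-- The number of elements of `R(P)` that are at most `s`. -/
def Rcount (P : Multiset ℕ) (s : ℕ) : ℕ := ((Rset P).filter (· ≤ s)).card

lemma Rcount_zero (P : Multiset ℕ) : Rcount P 0 = 0 := by
  rw [Rcount, Finset.card_eq_zero, Finset.filter_eq_empty_iff]
  intro j hj
  have := one_le_of_mem_Rset hj
  omega

lemma Rcount_succ (P : Multiset ℕ) (s : ℕ) :
    Rcount P (s + 1) = Rcount P s + if s + 1 ∈ Rset P then 1 else 0 := by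
  have h : (Rset P).filter (· ≤ s + 1) =
      (Rset P).filter (· ≤ s) ∪ (Rset P).filter (· = s + 1) := by
    simp only [← Finset.filter_or, Nat.le_succ_iff]
  rw [Rcount, Rcount, h, Finset.card_union_of_disjoint, Finset.filter_eq', apply_ite Finset.card,
    Finset.card_singleton, Finset.card_empty]
  exact Finset.disjoint_filter.2 fun j _ hj => by omega

lemma kernelFun_eq_kernelFun_dP_add (P : Multiset ℕ) (s : ℕ) :
    kernelFun P s = kernelFun (dP P) s + Rcount P s := by
  have hR (R : Finset ℕ) (hR : ∀ j ∈ R, 1 ≤ j) : kernelFun R.val s =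
      kernelFun (R.val.map (· - 1)) s + (R.filter (· ≤ s)).card := by
    induction R using Finset.induction_on with
    | empty => rfl
    | insert j R hj ih =>
      rw [Finset.forall_mem_insert] at hR
      have ih := ih hR.2
      rw [Finset.insert_val_of_notMem hj, Finset.filter_insert, Multiset.map_cons,
        kernelFun_cons, kernelFun_cons]
      split_ifs
      · rw [Finset.card_insert_of_notMem (by simp [hj])]
        omega
      · omega
  have hP := kernelFun_add (P - (Rset P).val) (Rset P).val s
  rw [Multiset.sub_add_cancel (Rset_val_le P), hR _ fun _ => one_le_of_mem_Rset] at hP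
  rw [hP, dP, kernelFun_add, kernelFun_filter_pos, Rcount, add_assoc]

/-- The recursion linking the values `a', b', c'` of the kernel function of `∂P` at `s`, `s + 1`,
`s + 2` to the values `a, b, c` of that of `P`.  The differences count the elements of `R(P)`, and
`s + 2 ∈ R(P)` precisely when `s + 1` is a part of `∂P` and `s + 1 ∉ R(P)`. -/
def IsBurgeWindow (a' b' c' a b c : ℕ) : Prop :=
  c + b' = b + c' + if a' + c' < 2 * b' ∧ b + a' = a + b' then 1 else 0

/-- The relation between the kernel functions `f'` of `∂P` and `f` of `P`, where `c` tells whether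
`P` is in class B. -/
structure IsBurgeStep (c : Bool) (f' f : ℕ → ℕ) : Prop where
  zero : f 0 = f' 0
  one : f 1 = f' 1 + if c then 1 else 0
  window (s : ℕ) :
    IsBurgeWindow (f' s) (f' (s + 1)) (f' (s + 2)) (f s) (f (s + 1)) (f (s + 2))

lemma IsBurgeStep.unique {c : Bool} {f' f₁ f₂ : ℕ → ℕ} (h₁ : IsBurgeStep c f' f₁)
    (h₂ : IsBurgeStep c f' f₂) : f₁ = f₂ := by
  have h (s : ℕ) : f₁ s = f₂ s ∧ f₁ (s + 1) = f₂ (s + 1) := by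
    induction s with
    | zero => exact ⟨h₁.zero.trans h₂.zero.symm, h₁.one.trans h₂.one.symm⟩
    | succ s ih =>
      have e₁ := h₁.window s
      have e₂ := h₂.window s
      rw [ih.1, ih.2] at e₁
      exact ⟨ih.2, add_right_cancel (e₁.trans e₂.symm)⟩
  exact funext fun s => (h s).1

lemma isBurgeStep_kernelFun (P : Multiset ℕ) :
    IsBurgeStep (decide (1 ∈ Rset P)) (kernelFun (dP P)) (kernelFun P) where
  zero := by rw [kernelFun_zero_right, kernelFun_zero_right]
  one := by simp [kernelFun_eq_kernelFun_dP_add P, Rcount_succ, Rcount_zero]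
  window s := by
    have hcount := two_mul_kernelFun_succ P s
    have hR := mem_Rset_iff P (Nat.le_add_left 1 s)
    have r₁ := Rcount_succ P s
    have r₂ : Rcount P (s + 2) = _ := Rcount_succ P (s + 1)
    have e₀ := kernelFun_eq_kernelFun_dP_add P s
    have e₁ := kernelFun_eq_kernelFun_dP_add P (s + 1)
    have e₂ := kernelFun_eq_kernelFun_dP_add P (s + 2)
    unfold IsBurgeWindow
    by_cases h₁ : s + 1 ∈ Rset P <;> by_cases h₂ : s + 2 ∈ Rset P <;>
      simp only [h₁, h₂, if_true, if_false, true_iff, false_iff, not_true, not_false_iff,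
        and_true, and_false] at hR r₁ r₂ <;> split_ifs <;> omega

lemma kernelFun_eq_of_isBurgeStep {P : Multiset ℕ} {f' f : ℕ → ℕ} (hP : kernelFun (dP P) = f')
    (h : IsBurgeStep (decide (1 ∈ Rset P)) f' f) : kernelFun P = f :=
  (hP ▸ isBurgeStep_kernelFun P).unique h

lemma zero_notMem_dP {P : Multiset ℕ} (h : 0 ∉ P) : 0 ∉ dP P := by
  rw [dP, Multiset.mem_add, not_or]
  exact ⟨fun h' => h (Multiset.mem_of_le (Multiset.sub_le_self _ _) h'), by simp⟩

lemma Rset_nonempty {P : Multiset ℕ} (h0 : 0 ∉ P) (hP : P ≠ 0) : (Rset P).Nonempty := by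
  obtain ⟨p, hp⟩ := Multiset.exists_mem_of_ne_zero hP
  have hp1 : 1 ≤ p := Nat.one_le_iff_ne_zero.2 fun h => h0 (h ▸ hp)
  by_cases h : p + 1 ∈ Rset P
  · exact ⟨_, h⟩
  · exact ⟨p, (mem_Rset_iff P hp1).2 ⟨Multiset.count_pos.2 hp, h⟩⟩

lemma sum_dP_lt {P : Multiset ℕ} (h0 : 0 ∉ P) (hP : P ≠ 0) : (dP P).sum < P.sum := by
  set m := max P.sup (dP P).sup
  have h := kernelFun_eq_kernelFun_dP_add P m
  rw [kernelFun_eq_sum (le_max_left _ _), kernelFun_eq_sum (le_max_right _ _)] at h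
  suffices 0 < Rcount P m by omega
  obtain ⟨j, hj⟩ := Rset_nonempty h0 hP
  have hjm : j ≤ m := (mem_RsetGo_bounds _ hj).2.trans (le_max_left _ _)
  exact Finset.card_pos.2 ⟨j, Finset.mem_filter.2 ⟨hj, hjm⟩⟩

/-- The word `w` is the Burge code of `P`, defined without reference to fuel. -/
inductive HasBurgeCode : List Bool → Multiset ℕ → Prop
  | empty : HasBurgeCode [false] 0
  | cons {c : Bool} {w : List Bool} {P : Multiset ℕ} (hP : P ≠ 0) (hc : decide (1 ∈ Rset P) = c)
      (h : HasBurgeCode w (dP P)) : HasBurgeCode (c :: w) P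

lemma hasBurgeCode_burgeGo {n : ℕ} {P : Multiset ℕ} (h0 : 0 ∉ P) (hn : P.sum < n) :
    HasBurgeCode (burgeGo n P) P := by
  induction n generalizing P with
  | zero => omega
  | succ n ih =>
    rw [burgeGo]
    split_ifs with hP h1
    · exact hP ▸ .empty
    all_goals
      have := sum_dP_lt h0 hP
      exact .cons hP (by simp [h1]) (ih (zero_notMem_dP h0) (by omega))

lemma hasBurgeCode_burgeCode {P : Multiset ℕ} (h0 : 0 ∉ P) : HasBurgeCode (burgeCode P) P :=
  hasBurgeCode_burgeGo h0 (Nat.lt_succ_self _)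

lemma kernelFun_eq_of_hasBurgeCode_singleton {P : Multiset ℕ} (h : HasBurgeCode [false] P) :
    kernelFun P = 0 := by
  cases h with
  | empty => exact funext kernelFun_zero_left
  | cons _ _ h => exact nomatch h

lemma kernelFun_eq_of_hasBurgeCode_replicate_append {c : Bool} {w : List Bool} {f : ℕ → ℕ → ℕ}
    (hw : w ≠ []) (hwf : ∀ P, HasBurgeCode w P → kernelFun P = f 0)
    (hf : ∀ j, IsBurgeStep c (f j) (f (j + 1))) (j : ℕ) (P : Multiset ℕ)
    (hP : HasBurgeCode (List.replicate j c ++ w) P) : kernelFun P = f j := by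
  induction j generalizing P with
  | zero => exact hwf P hP
  | succ j ih =>
    rw [List.replicate_succ, List.cons_append] at hP
    generalize hw' : List.replicate j c ++ w = w' at hP ih
    cases hP with
    | empty => exact absurd (List.append_eq_nil_iff.1 hw').2 hw
    | cons _ hc h => exact kernelFun_eq_of_isBurgeStep (ih _ h) (hc ▸ hf j)

lemma isBurgeWindow_min_add_one_add_two {a b c T : ℕ} (hab : a ≤ b) (hbc : b ≤ c)
    (hac : a + c ≤ 2 * b) (hlin : c ≤ T → a + c = 2 * b) :
    IsBurgeWindow (min a T) (min b T) (min c T)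
      (min (a + 1) (T + 2)) (min (b + 1) (T + 2)) (min (c + 1) (T + 2)) := by
  unfold IsBurgeWindow
  split_ifs <;> omega

lemma isBurgeWindow_min_min {α x a b c T : ℕ} (hba : b ≤ a + α) (hcb : c ≤ b + α)
    (hab : a ≤ b) (hbc : b ≤ c)
    (hac : a + c ≤ 2 * b) (hsep : x ≤ a → c ≤ T) (hlin : a < x → c ≤ T → a + c = 2 * b) :
    IsBurgeWindow (min x (min a T)) (min (x + α) (min b T)) (min (x + 2 * α) (min c T))
      (min x (min (a + 1) (T + 2))) (min (x + α) (min (b + 1) (T + 2)))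
      (min (x + 2 * α) (min (c + 1) (T + 2))) := by
  rcases le_or_gt x a with h | h
  · have := hsep h
    rw [min_eq_left (by omega : a ≤ T), min_eq_left (by omega : b ≤ T), min_eq_left this,
      min_eq_left (by omega : a + 1 ≤ T + 2), min_eq_left (by omega : b + 1 ≤ T + 2),
      min_eq_left (by omega : c + 1 ≤ T + 2)]
    unfold IsBurgeWindow
    split_ifs <;> omega
  · rw [min_eq_right (by omega : min a T ≤ x), min_eq_right (by omega : min b T ≤ x + α),
      min_eq_right (by omega : min c T ≤ x + 2 * α),
      min_eq_right (by omega : min (a + 1) (T + 2) ≤ x),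
      min_eq_right (by omega : min (b + 1) (T + 2) ≤ x + α),
      min_eq_right (by omega : min (c + 1) (T + 2) ≤ x + 2 * α)]
    exact isBurgeWindow_min_add_one_add_two hab hbc hac (hlin h)

/-- The order of vanishing at `t = 0` of the diagonal entry of the `s`-th power of the matrix
`(a, t^r g; h, b)` when `ord a = k`, `ord b = e` and `g`, `h` are units (for `s ≥ 1`). -/
def entryOrder (r k e s : ℕ) : ℕ := min (s * k) (r + (s - 2) * e)

lemma entryOrder_zero (r k e : ℕ) : entryOrder r k e 0 = 0 := by
  rw [entryOrder, zero_mul, Nat.zero_min]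

lemma entryOrder_one {r k : ℕ} (hk : k ≤ r) (e : ℕ) : entryOrder r k e 1 = k := by
  simpa [entryOrder] using hk

lemma entryOrder_add_two (r k e t : ℕ) :
    entryOrder r k e (t + 2) = min (t * k + 2 * k) (r + t * e) := by
  rw [entryOrder, add_mul, Nat.add_sub_cancel]

lemma entryOrder_add_three (r k e t : ℕ) :
    entryOrder r k e (t + 3) = min (t * k + 3 * k) (r + (t * e + e)) := by
  rw [entryOrder, add_mul, show t + 3 - 2 = t + 1 from rfl, add_mul, one_mul]

lemma entryOrder_le_succ (r k e s : ℕ) : entryOrder r k e s ≤ entryOrder r k e (s + 1) :=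
  min_le_min (Nat.mul_le_mul_right k s.le_succ)
    (Nat.add_le_add_left (Nat.mul_le_mul_right e (Nat.sub_le_sub_right s.le_succ 2)) r)

lemma entryOrder_succ_le {r k : ℕ} (hk : k ≤ r) (e s : ℕ) :
    entryOrder r k e (s + 1) ≤ entryOrder r k e s + (k + e) := by
  match s with
  | 0 => rw [zero_add, entryOrder_one hk]; omega
  | 1 => rw [entryOrder_add_two, entryOrder_one hk]; omega
  | t + 2 =>
    rw [show t + 2 + 1 = t + 3 from rfl, entryOrder_add_three, entryOrder_add_two]
    omega

lemma entryOrder_concave {r k e : ℕ} (hke : k + e ≤ r) (s : ℕ) :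
    entryOrder r k e s + entryOrder r k e (s + 2) ≤ 2 * entryOrder r k e (s + 1) := by
  match s with
  | 0 => rw [zero_add, entryOrder_zero, entryOrder_add_two, entryOrder_one (by omega)]; omega
  | 1 => rw [entryOrder_one (by omega), entryOrder_add_two, entryOrder_add_two]; omega
  | t + 2 =>
    rw [show t + 2 + 1 = t + 3 from rfl, entryOrder_add_two, entryOrder_add_two,
      entryOrder_add_three, add_mul, add_mul]
    omega

/-- When `k + e = r` the two slopes of `entryOrder` meet at `s = 1`. -/
lemma entryOrder_succ_of_add_eq {r k e : ℕ} (hke : k + e = r) (s : ℕ) :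
    entryOrder r k e (s + 1) = k + s * min k e := by
  match s with
  | 0 => rw [zero_add, entryOrder_one (by omega), zero_mul, add_zero]
  | t + 1 =>
    rw [show t + 1 + 1 = t + 2 from rfl, entryOrder_add_two, add_mul]
    rcases le_total k e with h | h
    · have := Nat.mul_le_mul_left t h
      rw [min_eq_left h]
      omega
    · have := Nat.mul_le_mul_left t h
      rw [min_eq_right h]
      omega

lemma entryOrder_affine {r k e s : ℕ} (hke : k + e ≤ r)
    (h : s * k ≤ entryOrder r k e s → entryOrder r k e (s + 2) < r + s * e) (hs : 1 ≤ s) :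
    entryOrder r k e s + entryOrder r k e (s + 2) = 2 * entryOrder r k e (s + 1) := by
  have hconc := entryOrder_concave hke s
  have hle : entryOrder r k e (s + 1) ≤ s * k + k := by
    rw [← Nat.succ_mul]
    exact min_le_left _ _
  rw [entryOrder_add_two] at h hconc ⊢
  rcases le_or_gt (s * k) (entryOrder r k e s) with hs' | hs'
  · have := h hs'
    omega
  · obtain ⟨t, rfl⟩ : ∃ t, s = t + 2 := ⟨s - 2, by
      rcases hs.eq_or_lt with rfl | hs
      · rw [entryOrder_one (by omega)] at hs'; omega
      · omega⟩
    have : e ≤ k := by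
      by_contra! hek
      have := Nat.mul_le_mul_left t hek.le
      rw [entryOrder_add_two, add_mul] at hs'
      omega
    rw [show t + 2 + 1 = t + 3 from rfl] at *
    simp only [entryOrder_add_two, add_mul] at *
    omega

/-- For `v = u - r` and `e = min l (r - k)`, the kernel function of the partition with Burge code
`α^(v-l) β^l α^(r-k) β^k α`.  At `s ≥ 1` its three terms are
the bounds which `det`, the entries, and the whole module impose. -/
def kernelProfile (v r k l e s : ℕ) : ℕ :=
  min (s * (k + l)) (min (v + entryOrder r k e s) (r + 2 * v))

lemma kernelProfile_zero (v r k l e : ℕ) : kernelProfile v r k l e 0 = 0 := by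
  rw [kernelProfile, zero_mul, Nat.zero_min]

lemma kernelProfile_one {v r k l : ℕ} (hk : k ≤ r) (hl : l ≤ v) (e : ℕ) :
    kernelProfile v r k l e 1 = k + l := by
  rw [kernelProfile, entryOrder_one hk]
  omega

lemma kernelProfile_congr {v r k l e e' : ℕ} (he : v ≤ e) (he' : v ≤ e') :
    kernelProfile v r k l e = kernelProfile v r k l e' := by
  funext s
  rcases Nat.lt_or_ge 2 s with hs | hs
  · have h (e : ℕ) (he : v ≤ e) : v ≤ (s - 2) * e := he.trans (Nat.le_mul_of_pos_left e (by omega))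
    have := h e he
    have := h e' he'
    simp only [kernelProfile, entryOrder]
    omega
  · simp only [kernelProfile, entryOrder, Nat.sub_eq_zero_of_le hs, zero_mul]

lemma isBurgeStep_kernelProfile_of_lt {r k l e v : ℕ} (hke : k + e ≤ r) (hel : e ≤ l) (hlv : l ≤ v)
    (he : e = l ∨ k + e = r) :
    IsBurgeStep false (kernelProfile v r k l e) (kernelProfile (v + 1) r k l e) where
  zero := by rw [kernelProfile_zero, kernelProfile_zero]
  one := by rw [kernelProfile_one (by omega) hlv, kernelProfile_one (by omega) (by omega)]; rfl
  window s := by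
    have hmono := entryOrder_le_succ r k e
    have hsep (h : s * (k + l) ≤ v + entryOrder r k e s) :
        v + entryOrder r k e (s + 2) ≤ r + 2 * v := by
      have h₁ : entryOrder r k e s ≤ s * k := min_le_left _ _
      have h₂ := Nat.mul_le_mul_left s hel
      rw [entryOrder_add_two]
      rw [mul_add] at h
      omega
    have hlin (h : v + entryOrder r k e s < s * (k + l))
        (h' : v + entryOrder r k e (s + 2) ≤ r + 2 * v) :
        entryOrder r k e s + entryOrder r k e (s + 2) = 2 * entryOrder r k e (s + 1) := by
      obtain ⟨t, rfl⟩ : ∃ t, s = t + 1 := Nat.exists_eq_succ_of_ne_zero fun hs => by simp [hs] at h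
      rcases he with rfl | he
      · refine entryOrder_affine hke (fun h'' => ?_) (by omega)
        rw [mul_add] at h
        omega
      · rw [show t + 1 + 2 = t + 2 + 1 from rfl, entryOrder_succ_of_add_eq he,
          entryOrder_succ_of_add_eq he, entryOrder_succ_of_add_eq he]
        ring
    have hconc := entryOrder_concave hke s
    have hslope (s : ℕ) : entryOrder r k e (s + 1) ≤ entryOrder r k e s + (k + l) :=
      (entryOrder_succ_le (by omega) e s).trans (by omega)
    have h := isBurgeWindow_min_min (α := k + l) (x := s * (k + l)) (a := v + entryOrder r k e s)
      (b := v + entryOrder r k e (s + 1)) (c := v + entryOrder r k e (s + 2)) (T := r + 2 * v)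
      (by have := hslope s; omega) (by have : entryOrder r k e (s + 2) ≤ _ := hslope (s + 1); omega)
      (by have := hmono s; omega) (by have : _ ≤ entryOrder r k e (s + 2) := hmono (s + 1); omega)
      (by omega) hsep (fun h h' => by have := hlin h h'; omega)
    simpa only [kernelProfile, show (s + 1) * (k + l) = s * (k + l) + (k + l) by ring,
      show (s + 2) * (k + l) = s * (k + l) + 2 * (k + l) by ring,
      show r + 2 * (v + 1) = r + 2 * v + 2 by ring, add_right_comm v 1] using h

lemma kernelProfile_self_succ {r k e : ℕ} (hke : k + e = r) (l s : ℕ) :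
    kernelProfile l r k l e (s + 1) = min (l + (k + s * min k e)) (r + 2 * l) := by
  have h := Nat.mul_le_mul_left s (min_le_left k e)
  rw [kernelProfile, entryOrder_succ_of_add_eq hke, min_eq_right]
  rw [add_mul, mul_add]
  omega

lemma isBurgeStep_kernelProfile_self {r k e : ℕ} (hke : k + e = r) (l : ℕ) :
    IsBurgeStep true (kernelProfile l r k l e) (kernelProfile (l + 1) r k (l + 1) e) where
  zero := by rw [kernelProfile_zero, kernelProfile_zero]
  one := by rw [kernelProfile_one (by omega) le_rfl, kernelProfile_one (by omega) le_rfl]; rfl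
  window s := by
    simp only [kernelProfile_self_succ hke]
    match s with
    | 0 =>
      simp only [kernelProfile_zero, zero_mul, zero_add, one_mul, add_zero]
      unfold IsBurgeWindow
      split_ifs <;> omega
    | t + 1 =>
      have h := isBurgeWindow_min_add_one_add_two (a := l + (k + t * min k e))
        (b := l + (k + (t + 1) * min k e)) (c := l + (k + (t + 2) * min k e)) (T := r + 2 * l)
        (by rw [add_mul]; omega) (by rw [add_mul, add_mul]; omega) (by rw [add_mul, add_mul]; omega)
        (fun _ => by ring)
      simpa only [kernelProfile_self_succ hke, add_right_comm l 1, mul_add, mul_one, add_assoc]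
        using h

lemma isBurgeStep_min_mul_self (j : ℕ) :
    IsBurgeStep true (fun s => min (s * j) j) (fun s => min (s * (j + 1)) (j + 1)) where
  zero := by simp
  one := by simp
  window s := by
    have h (j t : ℕ) : min ((t + 1) * j) j = j :=
      min_eq_right (Nat.le_mul_of_pos_left j t.succ_pos)
    match s with
    | 0 => simp [IsBurgeWindow, two_mul]
    | t + 1 => simp [IsBurgeWindow, h, two_mul]

lemma isBurgeStep_min_mul {k n : ℕ} (h : k ≤ n) :
    IsBurgeStep false (fun s => min (s * k) n) (fun s => min (s * k) (n + 1)) where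
  zero := by simp
  one := by simp; omega
  window s := by
    simp only [add_mul, one_mul]
    unfold IsBurgeWindow
    split_ifs <;> omega

theorem kernelFun_eq_kernelProfile {r k l n : ℕ} (hk : k < r) {P : Multiset ℕ}
    (hP : HasBurgeCode (List.replicate n false ++ List.replicate l true ++
      List.replicate (r - k) false ++ List.replicate k true ++ [false]) P) :
    kernelFun P = kernelProfile (l + n) r k l (min l (r - k)) := by
  have hke : k + (r - k) = r := by omega
  simp only [List.append_assoc] at hP
  have h₁ : ∀ P, HasBurgeCode (List.replicate k true ++ [false]) P →
      kernelFun P = fun s => min (s * k) k :=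
    kernelFun_eq_of_hasBurgeCode_replicate_append (f := fun j s => min (s * j) j) (by simp)
      (fun P hP => by simpa using! kernelFun_eq_of_hasBurgeCode_singleton hP)
      isBurgeStep_min_mul_self k
  have h₂ : ∀ P, HasBurgeCode
      (List.replicate (r - k) false ++ (List.replicate k true ++ [false])) P →
      kernelFun P = fun s => min (s * k) r := by
    have := kernelFun_eq_of_hasBurgeCode_replicate_append (f := fun j s => min (s * k) (k + j))
      (by simp) h₁ (fun j => isBurgeStep_min_mul (Nat.le_add_right k j)) (r - k)
    simpa only [hke] using this
  have h₃ : ∀ P, HasBurgeCode (List.replicate l true ++ (List.replicate (r - k) false ++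
      (List.replicate k true ++ [false]))) P →
      kernelFun P = kernelProfile l r k l (min l (r - k)) := by
    intro P hP
    rw [kernelFun_eq_of_hasBurgeCode_replicate_append (f := fun j => kernelProfile j r k j (r - k))
      (by simp) (fun P hP => by rw [h₂ P hP]; funext s; simp [kernelProfile, entryOrder])
      (isBurgeStep_kernelProfile_self hke) l P hP]
    rcases le_total l (r - k) with h | h
    · rw [min_eq_left h]
      exact kernelProfile_congr h le_rfl
    · rw [min_eq_right h]
  exact kernelFun_eq_of_hasBurgeCode_replicate_append
    (f := fun j => kernelProfile (l + j) r k l (min l (r - k))) (by simp) h₃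
    (fun j => isBurgeStep_kernelProfile_of_lt (by omega) (min_le_left _ _) (by omega) (by omega))
    n P hP

/-! ### Kernel dimension of `Mmap` via two by two minors -/

/-- A Hermite normal form for a submodule `L` of `R × R`: `(p, c)` and `(0, q)` generate `L`. -/
structure IsHermiteForm {R : Type*} [CommRing R] (L : Submodule R (R × R)) (p c q : R) : Prop where
  mem : (p, c) ∈ L
  dvd_fst : ∀ v ∈ L, p ∣ v.1
  zero_mk_mem_iff : ∀ y, (0, y) ∈ L ↔ q ∣ y

lemma exists_isHermiteForm {R : Type*} [CommRing R] [IsPrincipalIdealRing R]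
    (L : Submodule R (R × R)) : ∃ p c q, IsHermiteForm L p c q := by
  obtain ⟨p, hp⟩ := (IsPrincipalIdealRing.principal (L.map (LinearMap.fst R R R))).principal
  obtain ⟨q, hq⟩ := (IsPrincipalIdealRing.principal (L.comap (LinearMap.inr R R R))).principal
  have hpL : p ∈ L.map (LinearMap.fst R R R) := hp ▸ Submodule.mem_span_singleton_self p
  obtain ⟨⟨_, c⟩, hc, rfl⟩ := hpL
  refine ⟨_, c, q, hc, fun v hv => ?_, fun y => ?_⟩
  · exact Ideal.mem_span_singleton.1 (hp.le ⟨v, hv, rfl⟩)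
  · rw [← Ideal.mem_span_singleton, Ideal.span, ← hq]
    rfl

namespace IsHermiteForm

variable {R : Type*} [CommRing R] {L : Submodule R (R × R)} {p c q : R}

lemma dvd_snd_sub (h : IsHermiteForm L p c q) {v : R × R} (hv : v ∈ L) {x : R}
    (hx : v.1 = p * x) : q ∣ v.2 - x * c := by
  rw [← h.zero_mk_mem_iff]
  convert L.sub_mem hv (L.smul_mem x h.mem) using 1
  ext <;> simp [hx, mul_comm]

lemma dvd_mul_iff (h : IsHermiteForm L p c q) {d : R} :
    d ∣ p * q ↔ ∀ v ∈ L, ∀ w ∈ L, d ∣ v.1 * w.2 - v.2 * w.1 := by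
  refine ⟨fun hd v hv w hw => hd.trans ?_, fun hd => ?_⟩
  · obtain ⟨x, hx⟩ := h.dvd_fst v hv
    obtain ⟨y, hy⟩ := h.dvd_fst w hw
    obtain ⟨x', hx'⟩ := h.dvd_snd_sub hv hx
    obtain ⟨y', hy'⟩ := h.dvd_snd_sub hw hy
    refine ⟨x * y' - x' * y, ?_⟩
    rw [hx, hy]
    linear_combination p * x * hy' - p * y * hx'
  · simpa using hd _ h.mem _ ((h.zero_mk_mem_iff q).2 dvd_rfl)

lemma le_comap_fst (h : IsHermiteForm L p c q) :
    L ≤ Submodule.comap (LinearMap.fst R R R) (Ideal.span {p}) :=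
  fun v hv => Ideal.mem_span_singleton.2 (h.dvd_fst v hv)

lemma comap_inr (h : IsHermiteForm L p c q) : L.comap (LinearMap.inr R R R) = Ideal.span {q} :=
  Submodule.ext fun y => (h.zero_mk_mem_iff y).trans Ideal.mem_span_singleton.symm

lemma exact_mapQ (h : IsHermiteForm L p c q) :
    Function.Exact (Submodule.mapQ (Ideal.span {q}) L (LinearMap.inr R R R) h.comap_inr.ge)
      (Submodule.mapQ L (Ideal.span {p}) (LinearMap.fst R R R) h.le_comap_fst) := by
  intro v
  obtain ⟨v, rfl⟩ := Submodule.mkQ_surjective _ v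
  simp only [Submodule.mkQ_apply, Submodule.mapQ_apply, LinearMap.fst_apply,
    Submodule.Quotient.mk_eq_zero, Ideal.mem_span_singleton, Set.mem_range]
  refine ⟨fun ⟨x, hx⟩ => ⟨Submodule.Quotient.mk (v.2 - x * c), ?_⟩, fun ⟨y, hy⟩ => ?_⟩
  · rw [Submodule.mapQ_apply, Submodule.Quotient.eq]
    convert L.smul_mem (-x) h.mem using 1
    ext <;> simp [hx, mul_comm]
  · obtain ⟨y, rfl⟩ := Submodule.mkQ_surjective _ y
    rw [Submodule.mkQ_apply, Submodule.mapQ_apply, Submodule.Quotient.eq] at hy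
    simpa using h.dvd_fst _ hy

lemma finrank_quotient {F : Type*} [Field F] {L : Submodule F[X] (F[X] × F[X])} {p c q : F[X]}
    (h : IsHermiteForm L p c q) [Module.Finite F ((F[X] × F[X]) ⧸ L)] :
    Module.finrank F ((F[X] × F[X]) ⧸ L) = p.natDegree + q.natDegree := by
  set φ := Submodule.mapQ (Ideal.span {q}) L (LinearMap.inr F[X] F[X] F[X]) h.comap_inr.ge
  set ψ := Submodule.mapQ L (Ideal.span {p}) (LinearMap.fst F[X] F[X] F[X]) h.le_comap_fst
  have hφ : Function.Injective (φ.restrictScalars F) := by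
    refine (injective_iff_map_eq_zero φ).2 fun y hy => ?_
    obtain ⟨y, rfl⟩ := Submodule.mkQ_surjective _ y
    rw [Submodule.mkQ_apply, Submodule.mapQ_apply, Submodule.Quotient.mk_eq_zero] at hy
    exact (Submodule.Quotient.mk_eq_zero _).2 (h.comap_inr.le hy)
  have hψ : Function.Surjective (ψ.restrictScalars F) := fun y => by
    obtain ⟨y, rfl⟩ := Submodule.mkQ_surjective _ y
    exact ⟨Submodule.Quotient.mk (y, 0), rfl⟩
  have hexact : LinearMap.ker (ψ.restrictScalars F) = LinearMap.range (φ.restrictScalars F) :=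
    LinearMap.exact_iff.1 h.exact_mapQ
  rw [← LinearMap.finrank_range_add_finrank_ker (ψ.restrictScalars F),
    LinearMap.range_eq_top.2 hψ, finrank_top, hexact, LinearMap.finrank_range_of_inj hφ,
    finrank_quotient_span_eq_natDegree, finrank_quotient_span_eq_natDegree]

end IsHermiteForm

lemma forall_span_dvd_minor_iff {R : Type*} [CommRing R] {S : Set (R × R)} {d : R} :
    (∀ v ∈ Submodule.span R S, ∀ w ∈ Submodule.span R S, d ∣ v.1 * w.2 - v.2 * w.1) ↔
      ∀ v ∈ S, ∀ w ∈ S, d ∣ v.1 * w.2 - v.2 * w.1 := by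
  refine ⟨fun h v hv w hw => h v (Submodule.subset_span hv) w (Submodule.subset_span hw),
    fun h v hv w hw => ?_⟩
  induction hv, hw using Submodule.span_induction₂ with
  | mem_mem v w hv hw => exact h v hv w hw
  | zero_left => simp
  | zero_right => simp
  | add_left v v' w _ _ _ h h' =>
    convert dvd_add h h' using 1
    simp only [Prod.fst_add, Prod.snd_add]
    ring
  | add_right v w w' _ _ _ h h' =>
    convert dvd_add h h' using 1
    simp only [Prod.fst_add, Prod.snd_add]
    ring
  | smul_left x v w _ _ h =>
    convert h.mul_left x using 1
    simp only [Prod.smul_fst, Prod.smul_snd, smul_eq_mul]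
    ring
  | smul_right x v w _ _ h =>
    convert h.mul_left x using 1
    simp only [Prod.smul_fst, Prod.smul_snd, smul_eq_mul]
    ring

noncomputable section

variable {F : Type*} [Field F] {u r : ℕ}

/-- The submodule of `F[X] × F[X]` such that `(F[X] × F[X]) ⧸ relationModule u r a g h b` is the
cokernel of `Mmap F u r _ a g h b`. -/
def relationModule (u r : ℕ) (a g h b : F[X]) : Submodule F[X] (F[X] × F[X]) :=
  Submodule.span F[X] {(a, h), (X ^ r * g, b), (X ^ u, 0), (0, X ^ (u - r))}

variable (F u r) in
/-- The quotient map `F[X] × F[X] → F[X]/(X^u) × F[X]/(X^(u-r))`. -/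
def mkPQ : (F[X] × F[X]) →ₗ[F] PQ F u × PQ F (u - r) :=
  LinearMap.prodMap ((Submodule.mkQ (Ideal.span {(X : F[X]) ^ u})).restrictScalars F)
    ((Submodule.mkQ (Ideal.span {(X : F[X]) ^ (u - r)})).restrictScalars F)

lemma mkPQ_surjective : Function.Surjective (mkPQ F u r) :=
  (Submodule.mkQ_surjective _).prodMap (Submodule.mkQ_surjective _)

lemma mkPQ_eq_mkPQ_iff {v w : F[X] × F[X]} : mkPQ F u r v = mkPQ F u r w ↔
    X ^ u ∣ v.1 - w.1 ∧ X ^ (u - r) ∣ v.2 - w.2 := by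
  rw [← Ideal.mem_span_singleton, ← Ideal.mem_span_singleton, ← Submodule.Quotient.eq,
    ← Submodule.Quotient.eq]
  exact Prod.ext_iff

lemma Mmap_mkPQ (hru : r ≤ u) (a g h b : F[X]) (v : F[X] × F[X]) :
    Mmap F u r hru a g h b (mkPQ F u r v) =
      mkPQ F u r (a * v.1 + X ^ r * g * v.2, h * v.1 + b * v.2) :=
  rfl

lemma mem_range_Mmap_iff (hru : r ≤ u) {a g h b : F[X]} {v : F[X] × F[X]} :
    mkPQ F u r v ∈ LinearMap.range (Mmap F u r hru a g h b) ↔ v ∈ relationModule u r a g h b := by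
  simp only [LinearMap.mem_range, mkPQ_surjective.exists, Mmap_mkPQ, mkPQ_eq_mkPQ_iff,
    relationModule, Submodule.mem_span_insert, Submodule.mem_span_singleton]
  constructor
  · rintro ⟨w, ⟨x, hx⟩, ⟨y, hy⟩⟩
    refine ⟨w.1, _, ⟨w.2, _, ⟨-x, _, ⟨-y, rfl⟩, rfl⟩, rfl⟩, Prod.ext ?_ ?_⟩
    · simp only [Prod.fst_add, Prod.smul_fst, smul_eq_mul]
      linear_combination -hx
    · simp only [Prod.snd_add, Prod.smul_snd, smul_eq_mul]
      linear_combination -hy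
  · rintro ⟨x, _, ⟨y, _, ⟨z, _, ⟨w, rfl⟩, rfl⟩, rfl⟩, rfl⟩
    refine ⟨(x, y), ⟨-z, ?_⟩, ⟨-w, ?_⟩⟩
    · simp only [Prod.fst_add, Prod.smul_fst, smul_eq_mul]
      ring
    · simp only [Prod.snd_add, Prod.smul_snd, smul_eq_mul]
      ring

instance finite_PQ (m : ℕ) : Module.Finite F (PQ F m) :=
  (monic_X_pow m).finite_quotient

/-- The cokernel of `Mmap F u r hru a g h b`, presented by `relationModule u r a g h b`. -/
def quotientRelationModuleEquiv (hru : r ≤ u) (a g h b : F[X]) :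
    ((F[X] × F[X]) ⧸ relationModule u r a g h b) ≃ₗ[F]
      (PQ F u × PQ F (u - r)) ⧸ LinearMap.range (Mmap F u r hru a g h b) :=
  (Submodule.Quotient.restrictScalarsEquiv F _).symm ≪≫ₗ
    Submodule.quotEquivOfEq _ _ (by
      ext v
      rw [Submodule.restrictScalars_mem, ← mem_range_Mmap_iff hru, LinearMap.mem_ker,
        LinearMap.comp_apply, Submodule.mkQ_apply, Submodule.Quotient.mk_eq_zero]) ≪≫ₗ
    ((LinearMap.range (Mmap F u r hru a g h b)).mkQ ∘ₗ mkPQ F u r).quotKerEquivOfSurjective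
      ((Submodule.mkQ_surjective _).comp mkPQ_surjective)

lemma finrank_ker_Mmap (hru : r ≤ u) (a g h b : F[X]) :
    Module.finrank F (LinearMap.ker (Mmap F u r hru a g h b)) =
      Module.finrank F ((F[X] × F[X]) ⧸ relationModule u r a g h b) := by
  have h₁ := LinearMap.finrank_range_add_finrank_ker (Mmap F u r hru a g h b)
  have h₂ := Submodule.finrank_quotient_add_finrank (LinearMap.range (Mmap F u r hru a g h b))
  rw [(quotientRelationModuleEquiv hru a g h b).finrank_eq]
  omega

lemma dvd_minor_relationModule_iff (hru : r ≤ u) {a g h b d : F[X]} :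
    (∀ v ∈ relationModule u r a g h b, ∀ w ∈ relationModule u r a g h b,
      d ∣ v.1 * w.2 - v.2 * w.1) ↔
    d ∣ a * b - X ^ r * g * h ∧ d ∣ X ^ (u - r) * a ∧ d ∣ X ^ u * h ∧ d ∣ X ^ u * g ∧
      d ∣ X ^ u * b ∧ d ∣ X ^ (2 * u - r) := by
  have hg : X ^ r * g * X ^ (u - r) = X ^ u * g := by
    rw [mul_right_comm, ← pow_add, Nat.add_sub_cancel' hru]
  have hX : (X : F[X]) ^ u * X ^ (u - r) = X ^ (2 * u - r) := by
    rw [← pow_add]; congr 1; omega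
  rw [relationModule, forall_span_dvd_minor_iff]
  simp only [Set.mem_insert_iff, Set.mem_singleton_iff, forall_eq_or_imp, forall_eq,
    mul_zero, zero_mul, zero_sub, sub_zero, dvd_neg, dvd_zero, hg, hX]
  rw [mul_comm h a, mul_comm b a, mul_comm b (X ^ r * g), mul_comm h (X ^ r * g),
    mul_comm h (X ^ u),
    mul_comm b (X ^ u), mul_comm a (X ^ (u - r)), mul_comm (X ^ (u - r)) (X ^ r * g),
    mul_comm (X ^ (u - r)) (X ^ u), hg, hX, dvd_sub_comm (a := d) (b := X ^ r * g * h), sub_self,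
    sub_self]
  simp only [dvd_zero, true_and, and_true]
  tauto

theorem le_finrank_ker_Mmap_iff (hru : r ≤ u) {a g h b : F[X]} {n : ℕ} :
    n ≤ Module.finrank F (LinearMap.ker (Mmap F u r hru a g h b)) ↔
    (X : F[X]) ^ n ∣ a * b - X ^ r * g * h ∧ (X : F[X]) ^ n ∣ X ^ (u - r) * a ∧
      (X : F[X]) ^ n ∣ X ^ u * h ∧ (X : F[X]) ^ n ∣ X ^ u * g ∧ (X : F[X]) ^ n ∣ X ^ u * b ∧
      n ≤ 2 * u - r := by
  have hpow (m n : ℕ) : (X : F[X]) ^ n ∣ X ^ m ↔ n ≤ m := pow_dvd_pow_iff X_ne_zero not_isUnit_X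
  have := Module.Finite.equiv (quotientRelationModuleEquiv hru a g h b).symm
  obtain ⟨p, c, q, hpq⟩ := exists_isHermiteForm (relationModule u r a g h b)
  have hdvd : p * q ∣ X ^ (2 * u - r) :=
    ((dvd_minor_relationModule_iff hru).1 (hpq.dvd_mul_iff.1 dvd_rfl)).2.2.2.2.2
  obtain ⟨m, -, hm⟩ := (dvd_prime_pow prime_X _).1 hdvd
  have h0 : p * q ≠ 0 := ne_zero_of_dvd_ne_zero (pow_ne_zero _ X_ne_zero) hdvd
  have hdeg : p.natDegree + q.natDegree = m := by
    rw [← natDegree_mul (left_ne_zero_of_mul h0) (right_ne_zero_of_mul h0),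
      natDegree_eq_of_degree_eq (degree_eq_degree_of_associated hm), natDegree_X_pow]
  rw [finrank_ker_Mmap, hpq.finrank_quotient, hdeg, ← hpow m n, ← hm.dvd_iff_dvd_right,
    hpq.dvd_mul_iff, dvd_minor_relationModule_iff hru, hpow]

end

/-! ### Powers of two by two matrices -/

section PowEntries

variable {R : Type*} [CommRing R]

/-- The element `q` such that the off-diagonal entries of the `s`-th power of the matrix
`(a, x; y, b)` are `x * q` and `y * q`, where `w = x * y`. -/
def offDiagFactor (a b w : R) : ℕ → R
  | 0 => 0
  | 1 => 1
  | s + 2 => (a + b) * offDiagFactor a b w (s + 1) - (a * b - w) * offDiagFactor a b w s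

/-- The upper left entry of the `s`-th power of the matrix `(a, x; y, b)`, where `w = x * y`. -/
def diagEntry (a b w : R) (s : ℕ) : R := offDiagFactor a b w (s + 1) - b * offDiagFactor a b w s

lemma offDiagFactor_comm (a b w : R) (s : ℕ) : offDiagFactor a b w s = offDiagFactor b a w s := by
  induction s using Nat.twoStepInduction with
  | zero => rfl
  | one => rfl
  | more s h₀ h₁ => rw [offDiagFactor, offDiagFactor, h₀, h₁, add_comm a, mul_comm a]

lemma offDiagFactor_succ (a b w : R) (s : ℕ) :
    offDiagFactor a b w (s + 1) = b * offDiagFactor a b w s + diagEntry a b w s := by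
  rw [diagEntry]
  ring

lemma offDiagFactor_succ' (a b w : R) (s : ℕ) :
    offDiagFactor a b w (s + 1) = a * offDiagFactor a b w s + diagEntry b a w s := by
  rw [diagEntry, offDiagFactor_comm b, offDiagFactor_comm b]
  ring

lemma diagEntry_zero (a b w : R) : diagEntry a b w 0 = 1 := by
  simp [diagEntry, offDiagFactor]

lemma diagEntry_succ (a b w : R) (s : ℕ) :
    diagEntry a b w (s + 1) = a * diagEntry a b w s + w * offDiagFactor a b w s := by
  rw [diagEntry, diagEntry, offDiagFactor]
  ring

lemma diagEntry_one (a b w : R) : diagEntry a b w 1 = a := by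
  rw [diagEntry_succ, diagEntry_zero, offDiagFactor]
  ring

lemma diagEntry_mul_diagEntry_sub (a b w : R) (s : ℕ) :
    diagEntry a b w s * diagEntry b a w s - w * offDiagFactor a b w s ^ 2 = (a * b - w) ^ s := by
  induction s with
  | zero => simp [diagEntry_zero, offDiagFactor]
  | succ s ih =>
    rw [diagEntry_succ, diagEntry_succ, offDiagFactor_succ, pow_succ (a * b - w) s, ← ih,
      offDiagFactor_comm b, diagEntry, diagEntry, offDiagFactor_comm b, offDiagFactor_comm b,
      offDiagFactor_succ' a b w s, diagEntry, offDiagFactor_comm b, offDiagFactor_comm b]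
    ring

section Map

variable {S : Type*} [CommRing S] (f : R →+* S)

lemma map_offDiagFactor (a b w : R) (s : ℕ) :
    f (offDiagFactor a b w s) = offDiagFactor (f a) (f b) (f w) s := by
  induction s using Nat.twoStepInduction with
  | zero => exact map_zero f
  | one => exact map_one f
  | more s h₀ h₁ => simp only [offDiagFactor, map_sub, map_mul, map_add, h₀, h₁]

lemma map_diagEntry (a b w : R) (s : ℕ) :
    f (diagEntry a b w s) = diagEntry (f a) (f b) (f w) s := by
  simp only [diagEntry, map_sub, map_mul, map_offDiagFactor]

end Map

section Bounds

variable {a b w p : R}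

lemma pow_dvd_offDiagFactor_succ (ha : p ∣ a) (hb : p ∣ b) (hD : p ^ 2 ∣ a * b - w) (s : ℕ) :
    p ^ s ∣ offDiagFactor a b w (s + 1) := by
  induction s using Nat.twoStepInduction with
  | zero => simp
  | one => simpa [offDiagFactor] using dvd_add ha hb
  | more s h₀ h₁ =>
    rw [offDiagFactor]
    refine dvd_sub ?_ ?_
    · exact (pow_succ' p (s + 1)).dvd.trans (mul_dvd_mul (dvd_add ha hb) h₁)
    · exact (show p ^ (s + 2) = p ^ 2 * p ^ s by ring).dvd.trans (mul_dvd_mul hD h₀)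

lemma pow_dvd_offDiagFactor_add_two (ha : p ∣ a) (hb : p ∣ b) (hD : p ^ 2 ∣ a * b - w) (s : ℕ) :
    p ^ s ∣ offDiagFactor a b w (s + 2) :=
  (pow_dvd_pow p s.le_succ).trans (pow_dvd_offDiagFactor_succ ha hb hD (s + 1))

lemma pow_dvd_diagEntry (ha : p ∣ a) (hb : p ∣ b) (hD : p ^ 2 ∣ a * b - w) (s : ℕ) :
    p ^ s ∣ diagEntry a b w s := by
  cases s with
  | zero => simp
  | succ s =>
    exact dvd_sub (pow_dvd_offDiagFactor_succ ha hb hD _)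
      ((pow_succ' p s).dvd.trans (mul_dvd_mul hb (pow_dvd_offDiagFactor_succ ha hb hD s)))

lemma mul_pow_dvd_diagEntry_sub_pow (ha : p ∣ a) (hb : p ∣ b) (hD : p ^ 2 ∣ a * b - w) (t : ℕ) :
    w * p ^ t ∣ diagEntry a b w (t + 2) - a ^ (t + 2) := by
  induction t with
  | zero =>
    rw [diagEntry_succ, diagEntry_one, offDiagFactor]
    exact Dvd.intro 1 (by ring)
  | succ t ih =>
    have h : diagEntry a b w (t + 3) - a ^ (t + 3) =
        a * (diagEntry a b w (t + 2) - a ^ (t + 2)) + w * offDiagFactor a b w (t + 2) := by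
      rw [diagEntry_succ]
      ring
    rw [h]
    refine dvd_add ?_ (mul_dvd_mul_left w (pow_dvd_offDiagFactor_succ ha hb hD (t + 1)))
    exact (show w * p ^ (t + 1) = p * (w * p ^ t) by ring).dvd.trans (mul_dvd_mul ha ih)

variable {ϖ : R}

lemma pow_mul_dvd_offDiagFactor_sub_pow (ha : p * ϖ ∣ a) (hb : p ∣ b) (hD : p ^ 2 * ϖ ∣ a * b - w)
    (s : ℕ) : p ^ s * ϖ ∣ offDiagFactor a b w (s + 1) - b ^ s := by
  have hQ := pow_dvd_offDiagFactor_succ ((dvd_mul_right _ _).trans ha) hb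
    ((dvd_mul_right _ _).trans hD)
  induction s using Nat.twoStepInduction with
  | zero => simp [offDiagFactor]
  | one => simpa [offDiagFactor] using ha
  | more s _ h₁ =>
    have h : offDiagFactor a b w (s + 3) - b ^ (s + 2) =
        b * (offDiagFactor a b w (s + 2) - b ^ (s + 1)) + a * offDiagFactor a b w (s + 2) -
          (a * b - w) * offDiagFactor a b w (s + 1) := by
      rw [offDiagFactor]
      ring
    rw [h]
    refine dvd_sub (dvd_add ?_ ?_) ?_
    · exact (show p ^ (s + 2) * ϖ = p * (p ^ (s + 1) * ϖ) by ring).dvd.trans (mul_dvd_mul hb h₁)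
    · exact (show p ^ (s + 2) * ϖ = p * ϖ * p ^ (s + 1) by ring).dvd.trans
        (mul_dvd_mul ha (hQ (s + 1)))
    · exact (show p ^ (s + 2) * ϖ = p ^ 2 * ϖ * p ^ s by ring).dvd.trans (mul_dvd_mul hD (hQ s))

lemma pow_mul_dvd_diagEntry_sub_pow (ha : p * ϖ ∣ a) (hb : p ∣ b) (hD : p ^ 2 * ϖ ∣ a * b - w)
    (s : ℕ) : p ^ s * ϖ ∣ diagEntry b a w s - b ^ s := by
  cases s with
  | zero => simp [diagEntry_zero]
  | succ s =>
    have h : diagEntry b a w (s + 1) - b ^ (s + 1) =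
        (offDiagFactor a b w (s + 2) - b ^ (s + 1)) - a * offDiagFactor a b w (s + 1) := by
      rw [diagEntry, offDiagFactor_comm b, offDiagFactor_comm b]
      ring
    rw [h]
    refine dvd_sub (pow_mul_dvd_offDiagFactor_sub_pow ha hb hD (s + 1)) ?_
    exact (show p ^ (s + 1) * ϖ = p * ϖ * p ^ s by ring).dvd.trans (mul_dvd_mul ha
      (pow_dvd_offDiagFactor_succ ((dvd_mul_right _ _).trans ha) hb
        ((dvd_mul_right _ _).trans hD) s))

lemma exists_diagEntry_eq_pow_add (ha : p * ϖ ∣ a) (hb : p ∣ b) (hD : p ^ 2 * ϖ ∣ a * b - w)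
    (t : ℕ) : ∃ y, diagEntry a b w (t + 2) = a ^ (t + 2) + w * y ∧ p ^ t * ϖ ∣ y - b ^ t := by
  induction t with
  | zero =>
    refine ⟨1, ?_, by simp⟩
    rw [diagEntry_succ, diagEntry_one, offDiagFactor]
    ring
  | succ t ih =>
    obtain ⟨y, hy, hdvd⟩ := ih
    refine ⟨a * y + offDiagFactor a b w (t + 2), by rw [diagEntry_succ, hy]; ring, ?_⟩
    rw [add_sub_assoc]
    refine dvd_add ?_ (pow_mul_dvd_offDiagFactor_sub_pow ha hb hD (t + 1))
    have hy : p ^ t ∣ y := by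
      simpa using dvd_add ((dvd_mul_right _ _).trans hdvd) (pow_dvd_pow_of_dvd hb t)
    exact (show p ^ (t + 1) * ϖ = p * ϖ * p ^ t by ring).dvd.trans (mul_dvd_mul ha hy)

lemma exists_eq_pow_mul_of_dvd_sub (hϖ : Prime ϖ) {b' y : R} (hb' : ¬ϖ ∣ b') {s : ℕ}
    (h : p ^ s * ϖ ∣ y - (p * b') ^ s) : ∃ z, ¬ϖ ∣ z ∧ y = p ^ s * z := by
  obtain ⟨z, hz⟩ := h
  refine ⟨b' ^ s + ϖ * z, fun h => hb' (hϖ.dvd_of_dvd_pow ((dvd_add_left (dvd_mul_right ϖ z)).1 h)),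
    ?_⟩
  linear_combination hz

lemma pow_dvd_mul_of_pow_mul_dvd_mul [IsDomain R] (hp : p ≠ 0) (hϖ : Prime ϖ) {b' c y y' : R}
    (hb' : ¬ϖ ∣ b') {s m : ℕ} (hy : p ^ s * ϖ ∣ y - (p * b') ^ s)
    (hy' : p ^ (s + 1) * ϖ ∣ y' - (p * b') ^ (s + 1)) (H : ϖ ^ m * p ∣ c * y') :
    ϖ ^ m ∣ c * y := by
  obtain ⟨z, -, rfl⟩ := exists_eq_pow_mul_of_dvd_sub hϖ hb' hy
  obtain ⟨z', hz', rfl⟩ := exists_eq_pow_mul_of_dvd_sub hϖ hb' hy'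
  rw [show c * (p ^ (s + 1) * z') = c * p ^ s * z' * p by ring, mul_dvd_mul_iff_right hp] at H
  rw [← mul_assoc]
  exact (hϖ.pow_dvd_of_dvd_mul_right m hz' H).mul_right z

end Bounds

/-- `d` divides the first diagonal entry of the `s`-th power of the matrix `(a, x * g; h, b)`, and
`x` times its second diagonal entry, `x` times its lower left entry, and its upper right entry. With
`x = X ^ r`, these are the quotients by `X ^ (u - r)` of the minors of the presentation of the
cokernel of `Mmap F u r _ a g h b ^ s` that are linear in the entries. -/
structure PowEntriesDvd (x a g h b : R) (s : ℕ) (d : R) : Prop where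
  fst : d ∣ diagEntry a b (x * g * h) s
  upper : d ∣ x * (g * offDiagFactor a b (x * g * h) s)
  lower : d ∣ x * (h * offDiagFactor a b (x * g * h) s)
  snd : d ∣ x * diagEntry b a (x * g * h) s

namespace PowEntriesDvd

variable {x a g h b d : R}

lemma of_dvd {s : ℕ} {d' : R} (hd : d' ∣ d) (H : PowEntriesDvd x a g h b s d) :
    PowEntriesDvd x a g h b s d' :=
  ⟨hd.trans H.fst, hd.trans H.upper, hd.trans H.lower, hd.trans H.snd⟩

lemma iff_dvd_pow {p : R} (ha : p ∣ a) (hb : p ∣ b) (hD : p ^ 2 ∣ a * b - x * g * h) {t : ℕ}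
    (hd : d ∣ x * p ^ t) : PowEntriesDvd x a g h b (t + 2) d ↔ d ∣ a ^ (t + 2) := by
  have hQ := pow_dvd_offDiagFactor_add_two ha hb hD t
  have hD' : p ^ 2 ∣ b * a - x * g * h := mul_comm a b ▸ hD
  have hdiff : d ∣ diagEntry a b (x * g * h) (t + 2) - a ^ (t + 2) := by
    refine (hd.trans ?_).trans (mul_pow_dvd_diagEntry_sub_pow ha hb hD t)
    exact mul_dvd_mul_right (mul_assoc x g h ▸ dvd_mul_right x _) _
  have hfst : d ∣ diagEntry a b (x * g * h) (t + 2) ↔ d ∣ a ^ (t + 2) :=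
    dvd_iff_dvd_of_dvd_sub hdiff
  refine ⟨fun H => hfst.1 H.fst, fun H => ⟨hfst.2 H, ?_, ?_, ?_⟩⟩
  · exact hd.trans (mul_dvd_mul_left x (hQ.mul_left g))
  · exact hd.trans (mul_dvd_mul_left x (hQ.mul_left h))
  · exact hd.trans (mul_dvd_mul_left x
      ((pow_dvd_pow p (Nat.le_add_right t 2)).trans (pow_dvd_diagEntry hb ha hD' _)))

/-- When `p` has exactly the order of `b`, passing from the `(t + 2)`-nd power to the `(t + 3)`-rd
multiplies the entries other than the first one by `p` up to units, which cancels. -/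
lemma of_succ [IsDomain R] {p ϖ b' : R} (hp : p ≠ 0) (hϖ : Prime ϖ) (hb' : ¬ϖ ∣ b')
    (ha : p * ϖ ∣ a) (hD : p ^ 2 * ϖ ∣ a * (p * b') - x * g * h) {t m : ℕ}
    (hm : ϖ ^ m ∣ a ^ (t + 2)) (H : PowEntriesDvd x a g h (p * b') (t + 3) (ϖ ^ m * p)) :
    PowEntriesDvd x a g h (p * b') (t + 2) (ϖ ^ m) := by
  have hpb : p ∣ p * b' := dvd_mul_right p b'
  have hQ := pow_mul_dvd_offDiagFactor_sub_pow ha hpb hD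
  have hB := pow_mul_dvd_diagEntry_sub_pow ha hpb hD
  obtain ⟨y, hAy, hy⟩ := exists_diagEntry_eq_pow_add ha hpb hD t
  obtain ⟨y', hAy', hy'⟩ := exists_diagEntry_eq_pow_add ha hpb hD (t + 1)
  have hfst : ϖ ^ m * p ∣ x * g * h * y' := by
    refine (dvd_add_right ?_).1 (hAy' ▸ H.fst)
    exact (mul_dvd_mul hm ((dvd_mul_right p ϖ).trans ha)).trans (pow_succ a (t + 2)).symm.dvd
  have hupper := H.upper
  have hlower := H.lower
  rw [← mul_assoc] at hupper hlower
  refine ⟨?_, ?_, ?_, ?_⟩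
  · exact hAy ▸ dvd_add hm (pow_dvd_mul_of_pow_mul_dvd_mul hp hϖ hb' hy hy' hfst)
  · exact mul_assoc x g _ ▸
      pow_dvd_mul_of_pow_mul_dvd_mul hp hϖ hb' (hQ (t + 1)) (hQ (t + 2)) hupper
  · exact mul_assoc x h _ ▸
      pow_dvd_mul_of_pow_mul_dvd_mul hp hϖ hb' (hQ (t + 1)) (hQ (t + 2)) hlower
  · exact pow_dvd_mul_of_pow_mul_dvd_mul hp hϖ hb' (hB (t + 2)) (hB (t + 3)) H.snd

end PowEntriesDvd

end PowEntries

noncomputable section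

variable {F : Type*} [Field F] {u r : ℕ}

lemma Mmap_pow (hru : r ≤ u) (a g h b : F[X]) (s : ℕ) :
    (Mmap F u r hru a g h b : Module.End F _) ^ s =
      Mmap F u r hru (diagEntry a b (X ^ r * g * h) s) (g * offDiagFactor a b (X ^ r * g * h) s)
        (h * offDiagFactor a b (X ^ r * g * h) s) (diagEntry b a (X ^ r * g * h) s) := by
  refine LinearMap.ext (mkPQ_surjective.forall.2 fun v => ?_)
  rw [Mmap_mkPQ]
  induction s with
  | zero => simp [diagEntry_zero, offDiagFactor]
  | succ s ih =>
    rw [pow_succ', Module.End.mul_apply, ih, Mmap_mkPQ, diagEntry_succ, diagEntry_succ,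
      offDiagFactor_comm b]
    refine congrArg _ (Prod.ext ?_ ?_)
    · rw [offDiagFactor_succ']
      ring
    · rw [offDiagFactor_succ]
      ring

lemma pow_dvd_pow_mul_iff {M : Type*} [CommMonoidWithZero M] [IsCancelMulZero M] {x : M}
    (hx : x ≠ 0) {m n : ℕ} {y : M} : x ^ n ∣ x ^ m * y ↔ x ^ (n - m) ∣ y := by
  rcases le_total m n with h | h
  · rw [← mul_dvd_mul_iff_left (pow_ne_zero m hx) (b := x ^ (n - m)), ← pow_add,
      Nat.add_sub_cancel' h]
  · rw [Nat.sub_eq_zero_of_le h, pow_zero]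
    exact iff_of_true ((pow_dvd_pow x h).mul_right y) (one_dvd y)

theorem le_finrank_ker_Mmap_pow_iff (hru : r ≤ u) {a g h b : F[X]} {s n : ℕ} :
    n ≤ Module.finrank F (LinearMap.ker ((Mmap F u r hru a g h b : Module.End F _) ^ s)) ↔
      X ^ n ∣ (a * b - X ^ r * g * h) ^ s ∧
        PowEntriesDvd (X ^ r) a g h b s (X ^ (n - (u - r))) ∧ n ≤ 2 * u - r := by
  have hdet := diagEntry_mul_diagEntry_sub a b (X ^ r * g * h) s
  have hX (y : F[X]) : X ^ n ∣ X ^ u * y ↔ X ^ (n - (u - r)) ∣ X ^ r * y := by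
    rw [← pow_dvd_pow_mul_iff X_ne_zero, ← mul_assoc, ← pow_add, Nat.sub_add_cancel hru]
  rw [Mmap_pow, le_finrank_ker_Mmap_iff, pow_dvd_pow_mul_iff X_ne_zero, hX, hX, hX, ← hdet,
    show X ^ r * (g * offDiagFactor a b (X ^ r * g * h) s) *
        (h * offDiagFactor a b (X ^ r * g * h) s) =
      X ^ r * g * h * offDiagFactor a b (X ^ r * g * h) s ^ 2 by ring]
  exact ⟨fun ⟨hd, ha, hh, hg, hb, hn⟩ => ⟨hd, ⟨ha, hg, hh, hb⟩, hn⟩,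
    fun ⟨hd, ⟨ha, hg, hh, hb⟩, hn⟩ => ⟨hd, ha, hh, hg, hb, hn⟩⟩

end

/-! ### The partition bounds the orders of the entries -/

/-- The first power at which `kernelProfile v r k l e` falls below the kernel of the `s`-th power
of the determinant is `t + 2`. -/
structure IsCriticalIndex (v r k l e t : ℕ) : Prop where
  mul_le : (t + 1) * l ≤ v
  lt : ∀ s, t + 2 ≤ s → v + entryOrder r k e s < s * (k + l)
  le_of_succ : ∀ t', t = t' + 1 → (t' + 2) * (k + l) ≤ v + entryOrder r k e (t' + 2)

lemma exists_isCriticalIndex {v r k l e : ℕ} (hk : 1 ≤ k) (hkr : k ≤ r) (hlv : l ≤ v)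
    (hel : e ≤ l) : ∃ t, IsCriticalIndex v r k l e t := by
  have hex : ∃ t, v + entryOrder r k e (t + 2) < (t + 2) * (k + l) := by
    refine ⟨v + r, ?_⟩
    have hζ : entryOrder r k e (v + r + 2) ≤ r + (v + r) * e := by
      rw [entryOrder_add_two]
      exact min_le_right _ _
    nlinarith [Nat.mul_le_mul (Nat.le_add_right (v + r) 2) (Nat.add_le_add hk hel)]
  classical
  refine ⟨Nat.find hex, ?_, fun s hs => ?_, fun t' ht => ?_⟩
  · rcases h : Nat.find hex with - | t
    · omega
    · have hmin := Nat.find_min hex (m := t) (by omega)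
      have hζ : entryOrder r k e (t + 2) ≤ (t + 2) * k := min_le_left _ _
      nlinarith
  · induction s, hs using Nat.le_induction with
    | base => exact Nat.find_spec hex
    | succ s _ ih =>
      have := entryOrder_succ_le hkr e s
      rw [add_one_mul]
      omega
  · exact not_lt.1 (Nat.find_min hex (by omega))

section

variable {F : Type*} [Field F]

lemma exists_eq_X_pow_mul_of_not_dvd {p : F[X]} {n : ℕ} (h : ¬X ^ n ∣ p) :
    ∃ i < n, ∃ q, p = X ^ i * q ∧ ¬X ∣ q := by
  have hp : FiniteMultiplicity X p :=
    FiniteMultiplicity.of_prime_left prime_X fun hp => h (hp ▸ dvd_zero _)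
  obtain ⟨q, hq, hXq⟩ := hp.exists_eq_pow_mul_and_not_dvd
  exact ⟨multiplicity X p, hp.multiplicity_lt_iff_not_dvd.2 h, q, hq, hXq⟩

lemma X_pow_dvd_X_pow_mul_pow_iff {q : F[X]} (hq : ¬X ∣ q) {i m s : ℕ} :
    X ^ m ∣ (X ^ i * q) ^ s ↔ m ≤ s * i := by
  rw [mul_pow, ← pow_mul, pow_dvd_pow_mul_iff X_ne_zero, mul_comm i, ← Nat.sub_eq_zero_iff_le]
  refine ⟨fun h => by_contra fun h0 => hq ?_, fun h => h ▸ one_dvd _⟩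
  exact prime_X.dvd_of_dvd_pow ((dvd_pow_self X h0).trans h)

lemma X_pow_dvd_of_X_pow_dvd_X_pow_mul_mul {p q : F[X]} (hq : ¬X ∣ q) {i n : ℕ}
    (h : X ^ (n + i) ∣ X ^ i * q * p) : X ^ n ∣ p := by
  rw [mul_assoc, pow_dvd_pow_mul_iff X_ne_zero, Nat.add_sub_cancel] at h
  exact prime_X.pow_dvd_of_dvd_mul_left n hq h

lemma powEntriesDvd_X_pow_iff {q b g h : F[X]} {r i j m t : ℕ} (hq : ¬X ∣ q) (hji : j ≤ i)
    (hb : X ^ j ∣ b) (hD : X ^ (2 * j) ∣ X ^ i * q * b - X ^ r * g * h) (hm : m ≤ r + t * j) :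
    PowEntriesDvd (X ^ r) (X ^ i * q) g h b (t + 2) (X ^ m) ↔ m ≤ (t + 2) * i := by
  rw [PowEntriesDvd.iff_dvd_pow ((pow_dvd_pow X hji).mul_right q) hb,
    X_pow_dvd_X_pow_mul_pow_iff hq]
  · rwa [← pow_mul, mul_comm j]
  · rw [← pow_mul, ← pow_add]
    exact pow_dvd_pow X (by rwa [mul_comm j])

/-- `Mmap F (r + v) r _ a g h b` has the kernel dimensions `kernelProfile v r k l e`, in the terms
of `le_finrank_ker_Mmap_pow_iff`. -/
def HasKernelProfile (v r k l e : ℕ) (a g h b : F[X]) : Prop :=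
  ∀ s n, n ≤ kernelProfile v r k l e s ↔ X ^ n ∣ (a * b - X ^ r * g * h) ^ s ∧
    PowEntriesDvd (X ^ r) a g h b s (X ^ (n - v)) ∧ n ≤ r + 2 * v

namespace HasKernelProfile

variable {v r k l e t : ℕ} {a g h b : F[X]}

lemma X_pow_dvd_det (H : HasKernelProfile v r k l e a g h b) (hk : k ≤ r) (hl : l ≤ v) :
    X ^ (k + l) ∣ a * b - X ^ r * g * h := by
  simpa using ((H 1 (k + l)).1 (kernelProfile_one hk hl e).ge).1

lemma X_pow_dvd_mul (H : HasKernelProfile v r k l e a g h b) (hke : k + e ≤ r) (hel : e ≤ l)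
    (hl : l ≤ v) : X ^ (k + e) ∣ a * b := by
  have hD := (pow_dvd_pow X (Nat.add_le_add_left hel k)).trans (H.X_pow_dvd_det (by omega) hl)
  exact (dvd_iff_dvd_of_dvd_sub hD).2 (mul_assoc (X ^ r) g h ▸ (pow_dvd_pow X hke).mul_right _)

lemma X_pow_dvd_of_eq (H : HasKernelProfile v r k v e a g h b) (hk : k ≤ r) : X ^ k ∣ a := by
  have := ((H 1 (k + v)).1 (kernelProfile_one hk le_rfl e).ge).2.1.fst
  rwa [diagEntry_one, Nat.add_sub_cancel] at this

lemma powEntriesDvd_iff (H : HasKernelProfile v r k l e a g h b) {s m : ℕ}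
    (hs : v + entryOrder r k e s < s * (k + l)) (hkl : X ^ (k + l) ∣ a * b - X ^ r * g * h)
    (hm : m ≤ r + v) :
    PowEntriesDvd (X ^ r) a g h b s (X ^ m) ↔ m ≤ entryOrder r k e s := by
  refine ⟨fun hZ => not_lt.1 fun hlt => ?_, fun hle => ?_⟩
  · have hmin := (H s (v + (entryOrder r k e s + 1))).2 ⟨?_, ?_, by omega⟩
    · rw [kernelProfile] at hmin
      omega
    · refine (pow_dvd_pow X ?_).trans
        ((pow_mul X (k + l) s).dvd.trans (pow_dvd_pow_of_dvd hkl s))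
      rw [mul_comm]
      omega
    · rw [Nat.add_sub_cancel_left]
      exact hZ.of_dvd (pow_dvd_pow X hlt)
  · have := ((H s (v + m)).1 (by rw [kernelProfile]; omega)).2.1
    rwa [Nat.add_sub_cancel_left] at this

lemma X_pow_dvd_snd_of_order_fst {i j : ℕ} {q : F[X]}
    (H : HasKernelProfile v r k l e (X ^ i * q) g h b) (hq : ¬X ∣ q) (hke : k + e ≤ r)
    (hel : e ≤ l) (hlv : l ≤ v) (hij : j + i ≤ k + e) : X ^ j ∣ b :=
  X_pow_dvd_of_X_pow_dvd_X_pow_mul_mul hq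
    ((pow_dvd_pow X hij).trans (H.X_pow_dvd_mul hke hel hlv))

lemma lt_order_fst {i : ℕ} {q : F[X]} (H : HasKernelProfile v r k l e (X ^ i * q) g h b)
    (hq : ¬X ∣ q) (hik : i < k) (hke : k + e ≤ r) (hel : e ≤ l) (hlv : l ≤ v) : e < i := by
  by_contra! hie
  obtain ⟨t, ht⟩ := exists_isCriticalIndex (by omega : 1 ≤ k) (by omega : k ≤ r) hlv hel
  have hkl := H.X_pow_dvd_det (by omega) hlv
  have hb : X ^ i ∣ b := H.X_pow_dvd_snd_of_order_fst hq hke hel hlv (by omega)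
  have hζ : (t + 2) * i < entryOrder r k e (t + 2) := by
    rw [entryOrder_add_two]
    refine lt_min ?_ ?_ <;> nlinarith
  have hle : (t + 2) * i + 1 ≤ r + t * i := by nlinarith
  have hv : (t + 2) * i + 1 ≤ r + v := by nlinarith [ht.mul_le]
  have := (H.powEntriesDvd_iff (ht.lt _ le_rfl) hkl hv).2 hζ
  have := (powEntriesDvd_X_pow_iff hq le_rfl hb ((pow_dvd_pow X (by omega)).trans hkl) hle).1 this
  omega

lemma order_fst_of_lt {i : ℕ} {q : F[X]} (H : HasKernelProfile v r k l e (X ^ i * q) g h b)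
    (hq : ¬X ∣ q) (hei : e < i) (hik : i < k) (hke : k + e ≤ r) (hel : e ≤ l) (hlv : l < v)
    (ht : IsCriticalIndex v r k l e t) :
    v ≤ (t + 1) * e ∧ (1 ≤ t → (t + 2) * i = r + t * e) := by
  have hkl := H.X_pow_dvd_det (by omega) hlv.le
  have hb : X ^ (e + 1) ∣ b := H.X_pow_dvd_snd_of_order_fst hq hke hel hlv.le (by omega)
  have hD := (pow_dvd_pow X (by omega : 2 * (e + 1) ≤ k + l)).trans hkl
  have hZ {t m : ℕ} := powEntriesDvd_X_pow_iff (m := m) (t := t) hq hei hb hD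
  have hZ' {s m : ℕ} (hs : t + 2 ≤ s) := H.powEntriesDvd_iff (m := m) (ht.lt s hs) hkl
  have hte : t * e < v := by
    rcases t.eq_zero_or_pos with rfl | _
    · omega
    · nlinarith [ht.mul_le, Nat.mul_le_mul_left t hel]
  have hge : r + t * e ≤ (t + 2) * i := by
    by_contra! hlt
    have hζ : (t + 2) * i + 1 ≤ entryOrder r k e (t + 2) := by
      rw [entryOrder_add_two]
      exact le_min (by nlinarith) hlt
    have := (hZ (by nlinarith)).1 ((hZ' le_rfl (by omega)).2 hζ)
    omega
  refine ⟨not_lt.1 fun hlt => ?_, fun htpos => hge.antisymm' (not_lt.1 fun hlt => ?_)⟩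
  · have := (hZ' (t + 2).le_succ (by omega)).1
      ((hZ (t := t + 1) (m := r + (t + 1) * e + 1) (by nlinarith)).2 (by nlinarith))
    rw [entryOrder_add_three] at this
    have := this.trans (min_le_right _ _)
    linarith
  · have := (hZ' le_rfl (by omega)).1 ((hZ (m := r + t * e + 1) (by nlinarith)).2 hlt)
    rw [entryOrder_add_two] at this
    have := this.trans (min_le_right _ _)
    omega

lemma X_pow_dvd_fst (H : HasKernelProfile v r k l e a g h b) (hke : k + e ≤ r) (hel : e ≤ l)
    (hlv : l ≤ v) : X ^ k ∣ a := by
  rcases hlv.eq_or_lt with rfl | hlv'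
  · exact H.X_pow_dvd_of_eq (by omega)
  by_contra ha
  obtain ⟨i, hik, q, rfl, hq⟩ := exists_eq_X_pow_mul_of_not_dvd ha
  have hei := H.lt_order_fst hq hik hke hel hlv
  obtain ⟨t, ht⟩ := exists_isCriticalIndex (by omega : 1 ≤ k) (by omega : k ≤ r) hlv hel
  obtain ⟨hvt, hti⟩ := H.order_fst_of_lt hq hei hik hke hel hlv' ht
  rcases t with - | t
  · rw [zero_add, one_mul] at hvt
    omega
  have hti := hti (by omega)
  have hkl := H.X_pow_dvd_det (by omega) hlv
  have hb : X ^ (e + 1) ∣ b := H.X_pow_dvd_snd_of_order_fst hq hke hel hlv (by omega)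
  have hD := (pow_dvd_pow X (by omega : 2 * (e + 1) ≤ k + l)).trans hkl
  have hlt : kernelProfile v r k l e (t + 2) < v + ((t + 2) * i + 1) := by
    by_contra! hle
    have hZ := ((H _ _).1 hle).2.1
    rw [Nat.add_sub_cancel_left, powEntriesDvd_X_pow_iff hq hei hb hD (by nlinarith)] at hZ
    omega
  have hle := ht.le_of_succ t rfl
  have hbound : v + ((t + 2) * i + 1) ≤ r + 2 * v := by
    nlinarith [ht.mul_le, Nat.mul_le_mul_left t hel]
  rw [kernelProfile, min_lt_iff, min_lt_iff] at hlt
  have hupper : (t + 2) * (k + l) ≤ v + (t + 2) * i := by omega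
  have hlower := Nat.mul_le_mul_left (t + 2) (by omega : e + i + 1 ≤ k + l)
  linarith

lemma order_snd_lt {j : ℕ} {b' : F[X]} (H : HasKernelProfile v r k l e a g h (X ^ j * b'))
    (ha : X ^ (k + 1) ∣ a) (hje : j < e) (hk : 1 ≤ k) (hke : k + e ≤ r) (hel : e ≤ l)
    (ht : IsCriticalIndex v r k l e t) : j < k := by
  by_contra! hkj
  have hlv : l ≤ v := (Nat.le_mul_of_pos_left l t.succ_pos).trans ht.mul_le
  have hζ : entryOrder r k e (t + 2) = (t + 2) * k := by
    rw [entryOrder_add_two, add_mul, min_eq_left]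
    nlinarith
  have hkl := H.X_pow_dvd_det (by omega) hlv
  have hZ : PowEntriesDvd (X ^ r) a g h (X ^ j * b') (t + 2) (X ^ ((t + 2) * k + 1)) := by
    refine (PowEntriesDvd.iff_dvd_pow ((pow_dvd_pow X k.le_succ).trans ha)
      ((pow_dvd_pow X hkj).mul_right b') ?_ ?_).2 ?_
    · exact (pow_mul (X : F[X]) k 2).symm.dvd.trans ((pow_dvd_pow X (by omega)).trans hkl)
    · rw [← pow_mul, ← pow_add]
      exact pow_dvd_pow X (by nlinarith)
    · refine (pow_dvd_pow X ?_).trans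
        ((pow_mul X (k + 1) (t + 2)).dvd.trans (pow_dvd_pow_of_dvd ha _))
      nlinarith
  have := (H.powEntriesDvd_iff (ht.lt _ le_rfl) hkl
    (by nlinarith [ht.mul_le, Nat.mul_le_mul_left t hel])).1 hZ
  omega

lemma X_pow_dvd_snd (H : HasKernelProfile v r k l e a g h b) (hk : 1 ≤ k) (hke : k + e ≤ r)
    (hel : e ≤ l) (hlv : l ≤ v) : X ^ e ∣ b := by
  by_contra hb
  obtain ⟨j, hje, b, rfl, hq⟩ := exists_eq_X_pow_mul_of_not_dvd hb
  obtain ⟨t, ht⟩ := exists_isCriticalIndex hk (by omega : k ≤ r) hlv hel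
  have hab := H.X_pow_dvd_mul hke hel hlv
  rw [mul_comm] at hab
  have ha : X ^ (k + 1) ∣ a :=
    X_pow_dvd_of_X_pow_dvd_X_pow_mul_mul hq ((pow_dvd_pow X (by omega)).trans hab)
  have hjk := H.order_snd_lt ha hje hk hke hel ht
  have hkl := H.X_pow_dvd_det (by omega) hlv
  have hslope : entryOrder r k e (t + 2) + 1 + j ≤ entryOrder r k e (t + 3) := by
    rw [entryOrder_add_two, entryOrder_add_three]
    omega
  have hζ := min_le_right (t * k + 2 * k) (r + t * e)
  have hζ' := min_le_left (t * k + 2 * k) (r + t * e)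
  rw [← entryOrder_add_two] at hζ hζ'
  have hv : entryOrder r k e (t + 2) + 1 + j ≤ r + v := by
    nlinarith [ht.mul_le, Nat.mul_le_mul_left t hel]
  have hZ := (H.powEntriesDvd_iff (ht.lt (t + 3) (by omega)) hkl hv).2 hslope
  rw [pow_add] at hZ
  have := (H.powEntriesDvd_iff (ht.lt _ le_rfl) hkl (by omega)).1
    (hZ.of_succ ?_ prime_X hq ?_ ?_ ?_)
  · omega
  · exact pow_ne_zero j X_ne_zero
  · exact (pow_succ (X : F[X]) j).symm.dvd.trans ((pow_dvd_pow X (by omega)).trans ha)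
  · rw [← pow_mul, ← pow_succ]
    exact (pow_dvd_pow X (by omega)).trans hkl
  · refine (pow_dvd_pow X ?_).trans
      ((pow_mul X (k + 1) (t + 2)).dvd.trans (pow_dvd_pow_of_dvd ha _))
    nlinarith

lemma powEntriesDvd_X_pow_of_le (ha : X ^ k ∣ a) (hb : X ^ e ∣ b)
    (hD : X ^ (k + l) ∣ a * b - X ^ r * g * h) (hke : k + e ≤ r) (hel : e ≤ l) {s m : ℕ}
    (hm : m ≤ entryOrder r k e s) : PowEntriesDvd (X ^ r) a g h b s (X ^ m) := by
  match s with
  | 0 =>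
    rw [entryOrder_zero, Nat.le_zero] at hm
    subst hm
    exact ⟨one_dvd _, one_dvd _, one_dvd _, one_dvd _⟩
  | 1 =>
    rw [entryOrder_one (by omega)] at hm
    have hr : (X : F[X]) ^ m ∣ X ^ r := pow_dvd_pow X (by omega)
    refine ⟨?_, hr.mul_right _, hr.mul_right _, hr.mul_right _⟩
    rw [diagEntry_one]
    exact (pow_dvd_pow X hm).trans ha
  | t + 2 =>
    rw [entryOrder_add_two, le_min_iff] at hm
    refine (PowEntriesDvd.iff_dvd_pow (p := X ^ min k e)
      ((pow_dvd_pow X (min_le_left k e)).trans ha) ((pow_dvd_pow X (min_le_right k e)).trans hb)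
      ?_ ?_).2 ?_
    · rw [← pow_mul]
      exact (pow_dvd_pow X (by omega)).trans hD
    · rw [← pow_mul, ← pow_add]
      refine pow_dvd_pow X ?_
      rcases le_total k e with hle | hle
      · rw [min_eq_left hle]
        linarith
      · rw [min_eq_right hle]
        linarith
    · refine (pow_dvd_pow X ?_).trans ((pow_mul X k _).dvd.trans (pow_dvd_pow_of_dvd ha (t + 2)))
      linarith

lemma lt_of_entryOrder_lt (hk : 1 ≤ k) (he : 1 ≤ e) (hr : 2 ≤ r) {s : ℕ}
    (hs : entryOrder r k e s < r + v) : s < r + v := by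
  rw [entryOrder, min_lt_iff] at hs
  rcases hs with hs | hs
  · nlinarith
  · have := Nat.mul_le_mul_left (s - 2) he
    omega

theorem of_coeff_ne_zero (hk : 1 ≤ k) (he : 1 ≤ e) (hke : k + e ≤ r) (hel : e ≤ l)
    (ha : X ^ k ∣ a) (hb : X ^ e ∣ b) (hD : X ^ (k + l) ∣ a * b - X ^ r * g * h)
    (hDcoeff : (a * b - X ^ r * g * h).coeff (k + l) ≠ 0)
    (hAcoeff : ∀ s < r + v,
      (diagEntry a b (X ^ r * g * h) s).coeff (entryOrder r k e s) ≠ 0) :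
    HasKernelProfile v r k l e a g h b := by
  intro s n
  rw [kernelProfile, le_min_iff, le_min_iff]
  refine ⟨fun ⟨h₁, h₂, h₃⟩ => ⟨?_, ?_, h₃⟩, fun ⟨hDn, hZ, hn⟩ => ⟨?_, ?_, hn⟩⟩
  · rw [mul_comm] at h₁
    exact (pow_dvd_pow X h₁).trans ((pow_mul X (k + l) s).dvd.trans (pow_dvd_pow_of_dvd hD s))
  · exact powEntriesDvd_X_pow_of_le ha hb hD hke hel (by omega)
  · obtain ⟨q, hq⟩ := hD
    rw [hq] at hDn hDcoeff
    refine (X_pow_dvd_X_pow_mul_pow_iff (fun hXq => hDcoeff ?_)).1 hDn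
    rw [coeff_X_pow_mul', if_pos le_rfl, Nat.sub_self, X_dvd_iff.1 hXq]
  · by_contra! hlt
    refine hAcoeff s (lt_of_entryOrder_lt hk he (by omega) (by omega)) ?_
    exact X_pow_dvd_iff.1 hZ.fst _ (by omega)

end HasKernelProfile

end

/-! ### Points given by four polynomials -/

section

variable {R : Type*} [CommRing R] {n d : ℕ}

lemma coeff_sum_C_mul_X_pow_add (y : Fin n → R) (m : ℕ) :
    (∑ i, C (y i) * X ^ ((i : ℕ) + d)).coeff (m + d) = if h : m < n then y ⟨m, h⟩ else 0 := by
  simp only [finsetSum_coeff, coeff_C_mul, coeff_X_pow, add_left_inj, mul_ite, mul_one, mul_zero]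
  split_ifs with h
  · rw [Finset.sum_eq_single_of_mem ⟨m, h⟩ (Finset.mem_univ _), if_pos rfl]
    exact fun i _ hi => if_neg fun him => hi (Fin.ext him.symm)
  · exact Finset.sum_eq_zero fun i _ => if_neg fun him : m = i => h (him ▸ i.2)

lemma X_pow_dvd_sum_C_mul_X_pow_add (y : Fin n → R) :
    X ^ d ∣ ∑ i, C (y i) * X ^ ((i : ℕ) + d) :=
  Finset.dvd_sum fun _ _ => (pow_dvd_pow X (Nat.le_add_left _ _)).mul_left _

lemma X_pow_dvd_sum_coeff_sub {p : R[X]} (hp : X ^ d ∣ p) :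
    X ^ (n + d) ∣ ∑ i : Fin n, C (p.coeff (i + d)) * X ^ ((i : ℕ) + d) - p := by
  refine X_pow_dvd_iff.2 fun m hm => ?_
  rcases lt_or_ge m d with hmd | hmd
  · exact X_pow_dvd_iff.1 (dvd_sub (X_pow_dvd_sum_C_mul_X_pow_add _) hp) m hmd
  · obtain ⟨m, rfl⟩ := Nat.exists_eq_add_of_le' hmd
    rw [coeff_sub, coeff_sum_C_mul_X_pow_add, dif_pos (by omega), sub_self]

/-- The point whose coordinates are the coefficients of `a`, `g`, `h` and `b`; over a field it is
the inverse of `x ↦ (paOf x, pgOf x, phOf x, pbOf x)`. -/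
def coeffPoint (u r : ℕ) (a g h b : R[X]) : Vars u r → R
  | Sum.inl i => a.coeff (i + 1)
  | Sum.inr (Sum.inl i) => b.coeff (i + 1)
  | Sum.inr (Sum.inr (Sum.inl i)) => g.coeff i
  | Sum.inr (Sum.inr (Sum.inr i)) => h.coeff i

lemma map_coeffPoint {S : Type*} [CommRing S] (φ : R →+* S) (u r : ℕ) (a g h b : R[X]) :
    φ ∘ coeffPoint u r a g h b = coeffPoint u r (a.map φ) (g.map φ) (h.map φ) (b.map φ) := by
  ext (i | i | i | i) <;> exact (coeff_map φ _).symm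

lemma coeffPoint_congr {u r : ℕ} {a g h b a' g' h' b' : R[X]} (ha : X ^ u ∣ a - a')
    (hg : X ^ (u - r) ∣ g - g') (hh : X ^ (u - r) ∣ h - h') (hb : X ^ (u - r) ∣ b - b') :
    coeffPoint u r a g h b = coeffPoint u r a' g' h' b' := by
  have key {p q : R[X]} {n m : ℕ} (hpq : X ^ n ∣ p - q) (hm : m < n) : p.coeff m = q.coeff m :=
    sub_eq_zero.1 ((coeff_sub p q m).symm.trans (X_pow_dvd_iff.1 hpq m hm))
  ext (i | i | i | i)
  · exact key ha (by omega)
  · exact key hb (by omega)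
  · exact key hg i.2
  · exact key hh i.2

end

section

variable {F : Type*} [Field F] {u r : ℕ}

lemma coeffPoint_paOf (x : Vars u r → F) :
    coeffPoint u r (paOf F u r x) (pgOf F u r x) (phOf F u r x) (pbOf F u r x) = x := by
  ext (i | i | i | i)
  · exact (coeff_sum_C_mul_X_pow_add _ _).trans (dif_pos i.2)
  · exact (coeff_sum_C_mul_X_pow_add _ _).trans (dif_pos i.2)
  · exact (coeff_sum_C_mul_X_pow_add (d := 0) _ _).trans (dif_pos i.2)
  · exact (coeff_sum_C_mul_X_pow_add (d := 0) _ _).trans (dif_pos i.2)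

lemma X_dvd_paOf (x : Vars u r → F) : X ∣ paOf F u r x :=
  (pow_one X).symm.dvd.trans (X_pow_dvd_sum_C_mul_X_pow_add _)

lemma X_dvd_pbOf (x : Vars u r → F) : X ∣ pbOf F u r x :=
  (pow_one X).symm.dvd.trans (X_pow_dvd_sum_C_mul_X_pow_add _)

lemma Mmap_congr (hru : r ≤ u) {a g h b a' g' h' b' : F[X]} (ha : X ^ u ∣ a - a')
    (hg : X ^ (u - r) ∣ g - g') (hh : X ^ (u - r) ∣ h - h') (hb : X ^ (u - r) ∣ b - b') :
    Mmap F u r hru a g h b = Mmap F u r hru a' g' h' b' := by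
  refine LinearMap.ext fun v => ?_
  obtain ⟨v, rfl⟩ := mkPQ_surjective v
  have hXg : X ^ u ∣ X ^ r * (g - g') :=
    (congrArg (X ^ ·) (Nat.add_sub_cancel' hru)).symm.dvd.trans
      ((pow_add X r (u - r)).dvd.trans (mul_dvd_mul_left _ hg))
  rw [Mmap_mkPQ, Mmap_mkPQ, mkPQ_eq_mkPQ_iff]
  constructor
  · convert dvd_add (ha.mul_right v.1) (hXg.mul_right v.2) using 1
    ring
  · convert dvd_add (hh.mul_right v.1) (hb.mul_right v.2) using 1
    ring

lemma Mx_coeffPoint (hru : r < u) {a b : F[X]} (g h : F[X]) (ha : X ∣ a) (hb : X ∣ b) :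
    Mx F u r hru.le (coeffPoint u r a g h b) = Mmap F u r hru.le a g h b := by
  set x := coeffPoint u r a g h b
  have hpa : X ^ (u - 1 + 1) ∣ paOf F u r x - a :=
    X_pow_dvd_sum_coeff_sub ((pow_one X).dvd.trans ha)
  have hpb : X ^ (u - r - 1 + 1) ∣ pbOf F u r x - b :=
    X_pow_dvd_sum_coeff_sub ((pow_one X).dvd.trans hb)
  rw [Nat.sub_add_cancel (by omega)] at hpa hpb
  exact Mmap_congr hru.le hpa (X_pow_dvd_sum_coeff_sub (d := 0) (one_dvd g))
    (X_pow_dvd_sum_coeff_sub (d := 0) (one_dvd h)) hpb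

lemma eval_Av {a : F[X]} (g h b : F[X]) {i : ℕ} (hi : 1 ≤ i) (hiu : i < u) :
    MvPolynomial.eval (coeffPoint u r a g h b) (Av F u r i) = a.coeff i := by
  rw [Av, dif_pos (by omega), MvPolynomial.eval_X]
  exact congrArg a.coeff (Nat.sub_add_cancel hi)

lemma eval_Bv (a g h : F[X]) {b : F[X]} {i : ℕ} (hi : 1 ≤ i) (hiu : i < u - r) :
    MvPolynomial.eval (coeffPoint u r a g h b) (Bv F u r i) = b.coeff i := by
  rw [Bv, dif_pos (by omega), MvPolynomial.eval_X]
  exact congrArg b.coeff (Nat.sub_add_cancel hi)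

lemma eval_Gv (a g h b : F[X]) {i : ℕ} (hiu : i < u - r) :
    MvPolynomial.eval (coeffPoint u r a g h b) (Gv F u r i) = g.coeff i := by
  rw [Gv, dif_pos hiu, MvPolynomial.eval_X]
  rfl

lemma eval_Hv (a g h b : F[X]) {i : ℕ} (hiu : i < u - r) :
    MvPolynomial.eval (coeffPoint u r a g h b) (Hv F u r i) = h.coeff i := by
  rw [Hv, dif_pos hiu, MvPolynomial.eval_X]
  rfl

lemma forall_eval_Av_eq_zero_iff {a : F[X]} (g h b : F[X]) (ha : X ∣ a) {k : ℕ} (hk : k ≤ u) :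
    (∀ p, (∃ i, 1 ≤ i ∧ i ≤ k - 1 ∧ p = Av F u r i) →
      MvPolynomial.eval (coeffPoint u r a g h b) p = 0) ↔ X ^ k ∣ a := by
  rw [X_pow_dvd_iff]
  constructor
  · rintro H (- | i) hi
    · exact X_dvd_iff.1 ha
    · rw [← eval_Av g h b i.succ_pos (hi.trans_le hk)]
      exact H _ ⟨i + 1, i.succ_pos, by omega, rfl⟩
  · rintro H _ ⟨i, hi, hik, rfl⟩
    rw [eval_Av g h b hi (by omega), H i (by omega)]

lemma forall_eval_Bv_eq_zero_iff (a g h : F[X]) {b : F[X]} (hb : X ∣ b) {l : ℕ} (hl : l ≤ u - r) :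
    (∀ p, (∃ i, 1 ≤ i ∧ i ≤ l - 1 ∧ p = Bv F u r i) →
      MvPolynomial.eval (coeffPoint u r a g h b) p = 0) ↔ X ^ l ∣ b := by
  rw [X_pow_dvd_iff]
  constructor
  · rintro H (- | i) hi
    · exact X_dvd_iff.1 hb
    · rw [← eval_Bv a g h i.succ_pos (hi.trans_le hl)]
      exact H _ ⟨i + 1, i.succ_pos, by omega, rfl⟩
  · rintro H _ ⟨i, hi, hil, rfl⟩
    rw [eval_Bv a g h hi (by omega), H i (by omega)]

lemma eval_quadric (a b g h : F[X]) {k e m : ℕ} (he : 1 ≤ e) (hk : 1 ≤ k) (hkm : k + m < u)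
    (hem : e + m < u - r) :
    MvPolynomial.eval (coeffPoint u r (X ^ k * a) g h (X ^ e * b))
      ((∑ j ∈ Finset.range (m + 1), Av F u r (k + j) * Bv F u r (e + m - j)) -
        ∑ j ∈ Finset.range (m + 1), Gv F u r j * Hv F u r (m - j)) =
      (a * b - g * h).coeff m := by
  simp only [map_sub, map_sum, map_mul, coeff_sub, coeff_mul,
    Finset.Nat.sum_antidiagonal_eq_sum_range_succ_mk]
  congr 1 <;> refine Finset.sum_congr rfl fun j hj => ?_ <;>
    have hjm := Finset.mem_range_succ_iff.1 hj
  · rw [eval_Av _ _ _ (by omega) (by omega), eval_Bv _ _ _ (by omega) (by omega), add_comm k,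
      coeff_X_pow_mul, Nat.add_sub_assoc hjm, add_comm e, coeff_X_pow_mul]
  · rw [eval_Gv _ _ _ _ (by omega), eval_Hv _ _ _ _ (by omega)]

lemma X_pow_dvd_det_iff {k l e : ℕ} (he : e = min l (r - k)) (hkr : k ≤ r) {a g h b : F[X]} :
    X ^ (k + l) ∣ X ^ k * a * (X ^ e * b) - X ^ r * g * h ↔ X ^ (k + l - r) ∣ a * b - g * h := by
  have hab : X ^ k * a * (X ^ e * b) = X ^ (k + e) * (a * b) := by ring
  rw [hab, mul_assoc (X ^ r)]
  rcases le_total (k + l) r with hkl | hkl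
  · rw [Nat.sub_eq_zero_of_le hkl, pow_zero]
    refine iff_of_true (dvd_sub ?_ ((pow_dvd_pow X hkl).mul_right _)) (one_dvd _)
    exact (pow_dvd_pow X (by omega)).mul_right _
  · rw [show k + e = r by omega, ← mul_sub, pow_dvd_pow_mul_iff X_ne_zero]

theorem coeffPoint_mem_Xlocus_iff {k l e : ℕ} (he : e = min l (r - k)) (hru : r < u) (hk : 1 ≤ k)
    (hkr : k < r) (hlu : l ≤ u - r) {a g h b : F[X]} (ha : X ∣ a) (hb : X ∣ b) :
    coeffPoint u r a g h b ∈ Xlocus F u r k l ↔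
      X ^ k ∣ a ∧ X ^ e ∣ b ∧ X ^ (k + l) ∣ a * b - X ^ r * g * h := by
  rw [Xlocus, Eset, zLocus, Set.mem_ofPred_eq]
  split_ifs with hkl
  · simp only [Set.mem_union, or_imp, forall_and, Set.mem_ofPred_eq]
    rw [forall_eval_Av_eq_zero_iff _ _ _ ha (by omega), forall_eval_Bv_eq_zero_iff _ _ _ hb hlu,
      show e = l by omega]
    refine and_congr_right fun ha => (and_iff_left_of_imp fun hb => ?_).symm
    exact dvd_sub ((pow_add X k l).dvd.trans (mul_dvd_mul ha hb))
      (mul_assoc (X ^ r) g h ▸ (pow_dvd_pow X hkl).mul_right _)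
  · simp only [Set.mem_union, or_imp, forall_and, Set.mem_ofPred_eq]
    rw [forall_eval_Av_eq_zero_iff _ _ _ ha (by omega),
      forall_eval_Bv_eq_zero_iff _ _ _ hb (by omega), show e = r - k by omega, and_assoc]
    refine and_congr_right fun ⟨a', ha'⟩ => and_congr_right fun ⟨b', hb'⟩ => ?_
    rw [ha', hb', X_pow_dvd_det_iff (by omega) hkr.le, X_pow_dvd_iff]
    constructor
    · intro H m hm
      rw [← eval_quadric a' b' g h (u := u) (r := r) (e := r - k) (by omega) hk (by omega)
        (by omega)]
      exact H _ ⟨m, by omega, rfl⟩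
    · rintro H _ ⟨m, hm, rfl⟩
      rw [eval_quadric a' b' g h (by omega) hk (by omega) (by omega), H m (by omega)]

lemma jordanTypeIs_Mmap_iff (hru : r ≤ u) {P : Multiset ℕ} {k l e : ℕ}
    (hP : kernelFun P = kernelProfile (u - r) r k l e) {a g h b : F[X]} :
    JordanTypeIs F (Mmap F u r hru a g h b) P ↔ HasKernelProfile (u - r) r k l e a g h b := by
  have hdim : 2 * u - r = r + 2 * (u - r) := by omega
  have key (s n : ℕ) := le_finrank_ker_Mmap_pow_iff hru (a := a) (g := g) (h := h) (b := b)
    (s := s) (n := n)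
  rw [hdim] at key
  change (∀ s, _ = kernelFun P s) ↔ _
  simp only [HasKernelProfile, ← key, hP]
  exact forall_congr' fun s => ⟨fun H n => H ▸ Iff.rfl, fun H => (eq_of_forall_le_iff H).symm⟩

end

/-! ### Density -/

section Generic

variable {F : Type*} [Field F] {σ : Type*}

/-- The filter of sets of parameters containing the nonvanishing locus of a nonzero polynomial. -/
def genericFilter (σ F : Type*) [Field F] : Filter (σ → F) where
  sets := {U | ∃ c : MvPolynomial σ F, c ≠ 0 ∧ ∀ z, MvPolynomial.eval z c ≠ 0 → z ∈ U}
  univ_sets := ⟨1, one_ne_zero, fun _ _ => Set.mem_univ _⟩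
  sets_of_superset := fun ⟨c, hc, hU⟩ hUV => ⟨c, hc, fun z hz => hUV (hU z hz)⟩
  inter_sets := fun ⟨c, hc, hU⟩ ⟨d, hd, hV⟩ => ⟨c * d, mul_ne_zero hc hd, fun z hz => by
    rw [map_mul] at hz
    exact ⟨hU z (left_ne_zero_of_mul hz), hV z (right_ne_zero_of_mul hz)⟩⟩

lemma eq_zero_of_eventually_eval_eq_zero [Infinite F] {f : MvPolynomial σ F}
    (hf : ∀ᶠ z in genericFilter σ F, MvPolynomial.eval z f = 0) : f = 0 := by
  obtain ⟨c, hc, hcf⟩ := hf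
  refine (mul_eq_zero.1 (MvPolynomial.funext fun z => ?_)).resolve_left hc
  rw [map_mul, map_zero, mul_eq_zero]
  exact or_iff_not_imp_left.2 (hcf z)

/-- The coefficients of the polynomial `p z` are polynomial functions of the parameters `z`. -/
def IsPolyFamily (p : (σ → F) → F[X]) : Prop :=
  ∃ P : (MvPolynomial σ F)[X], ∀ z, P.map (MvPolynomial.eval z) = p z

namespace IsPolyFamily

variable {p q : (σ → F) → F[X]}

lemma const (p : F[X]) : IsPolyFamily fun _ : σ → F => p :=
  ⟨p.map MvPolynomial.C, fun z => by
    rw [Polynomial.map_map, MvPolynomial.eval, MvPolynomial.eval₂Hom_comp_C, Polynomial.map_id]⟩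

lemma param (i : σ) : IsPolyFamily fun z : σ → F => C (z i) :=
  ⟨C (MvPolynomial.X i), fun z => by rw [map_C, MvPolynomial.eval_X]⟩

lemma add : IsPolyFamily p → IsPolyFamily q → IsPolyFamily fun z => p z + q z :=
  fun ⟨P, hP⟩ ⟨Q, hQ⟩ => ⟨P + Q, fun z => by rw [Polynomial.map_add, hP, hQ]⟩

lemma sub : IsPolyFamily p → IsPolyFamily q → IsPolyFamily fun z => p z - q z :=
  fun ⟨P, hP⟩ ⟨Q, hQ⟩ => ⟨P - Q, fun z => by rw [Polynomial.map_sub, hP, hQ]⟩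

lemma mul : IsPolyFamily p → IsPolyFamily q → IsPolyFamily fun z => p z * q z :=
  fun ⟨P, hP⟩ ⟨Q, hQ⟩ => ⟨P * Q, fun z => by rw [Polynomial.map_mul, hP, hQ]⟩

lemma sum {ι : Type*} (s : Finset ι) {p : ι → (σ → F) → F[X]} (hp : ∀ i, IsPolyFamily (p i)) :
    IsPolyFamily fun z => ∑ i ∈ s, p i z := by
  choose P hP using hp
  exact ⟨∑ i ∈ s, P i, fun z => by
    rw [Polynomial.map_sum]
    exact Finset.sum_congr rfl fun i _ => hP i z⟩

lemma diagEntry {w : (σ → F) → F[X]} (s : ℕ) :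
    IsPolyFamily p → IsPolyFamily q → IsPolyFamily w →
      IsPolyFamily fun z => diagEntry (p z) (q z) (w z) s :=
  fun ⟨P, hP⟩ ⟨Q, hQ⟩ ⟨W, hW⟩ => ⟨_root_.diagEntry P Q W s, fun z => by
    simp only [← hP, ← hQ, ← hW]
    exact map_diagEntry (mapRingHom (MvPolynomial.eval z)) P Q W s⟩

lemma eventually_coeff_ne_zero {z₀ : σ → F} {n : ℕ} :
    IsPolyFamily p → (p z₀).coeff n ≠ 0 → ∀ᶠ z in genericFilter σ F, (p z).coeff n ≠ 0 := by
  rintro ⟨P, hP⟩ hn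
  simp only [← hP, coeff_map] at hn ⊢
  exact ⟨P.coeff n, fun h0 => hn (by rw [h0, map_zero]), fun _ => id⟩

end IsPolyFamily

end Generic

section

variable {F : Type*} [Field F]

/-- The polynomial function `f` vanishes at the point with `a = t^k a'`, `g`, `h` and
`b = t^e b'`. -/
def VanishesAt {u r : ℕ} (f : MvPolynomial (Vars u r) F) (k e : ℕ) (a' g h b' : F[X]) : Prop :=
  MvPolynomial.eval (coeffPoint u r (X ^ k * a') g h (X ^ e * b')) f = 0

lemma exists_X_pow_dvd_sub_mul {p q : F[X]} {i : ℕ} (hq : X ^ i ∣ q) (hqi : q.coeff i ≠ 0)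
    (hp : X ^ i ∣ p) (n : ℕ) : ∃ y, X ^ n ∣ p - q * y := by
  obtain ⟨p, rfl⟩ := hp
  obtain ⟨q, rfl⟩ := hq
  have hX : ¬X ∣ q := fun h => hqi (by
    rw [coeff_X_pow_mul', if_pos le_rfl, Nat.sub_self, X_dvd_iff.1 h])
  obtain ⟨z, y, hzy⟩ := (irreducible_X.coprime_iff_not_dvd.2 hX).pow_left (m := n)
  exact ⟨y * p, X ^ i * z * p, by linear_combination (-X ^ i * p) * hzy⟩

lemma exists_offDiag_factor {a g h b : F[X]} {c i u : ℕ} (hcu : c ≤ u) (ha : X ^ i ∣ a)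
    (hai : a.coeff i ≠ 0) (hg : X ^ i ∣ g) (hh : X ^ i ∣ h) (hD : X ^ c ∣ a * b - g * h) :
    ∃ x y, X ^ u ∣ g - a * y ∧ X ^ u ∣ h - x * a ∧ X ^ c ∣ a * (b - x * a * y) := by
  obtain ⟨y, hy⟩ := exists_X_pow_dvd_sub_mul ha hai hg u
  obtain ⟨x, hx⟩ := exists_X_pow_dvd_sub_mul ha hai hh u
  refine ⟨x, y, hy, mul_comm a x ▸ hx, ?_⟩
  convert dvd_add hD ((pow_dvd_pow X hcu).trans
    (dvd_add (hx.mul_right g) (hy.mul_right (a * x)))) using 1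
  ring

lemma exists_X_pow_dvd_forall_and_coeff_ne_zero {ι : Type*} {p : ι → F[X]} (hp : p ≠ 0) :
    ∃ i, (∀ j, X ^ i ∣ p j) ∧ ∃ j, (p j).coeff i ≠ 0 := by
  have hex : ∃ i, ∃ j, (p j).coeff i ≠ 0 := by
    by_contra! h0
    exact hp (funext fun j => Polynomial.ext fun i => h0 i j)
  classical
  refine ⟨Nat.find hex, fun j => X_pow_dvd_iff.2 fun m hm => ?_, Nat.find_spec hex⟩
  exact not_not.1 fun h0 => Nat.find_min hex hm ⟨j, h0⟩

namespace VanishesAt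

variable {u r k l e c : ℕ} {f : MvPolynomial (Vars u r) F}

lemma congr {a g h b a' g' h' b' : F[X]} (H : VanishesAt f k e a g h b) (ha : X ^ u ∣ a' - a)
    (hg : X ^ u ∣ g' - g) (hh : X ^ u ∣ h' - h) (hb : X ^ u ∣ b' - b) :
    VanishesAt f k e a' g' h' b' := by
  have hle := pow_dvd_pow (X : F[X]) (Nat.sub_le u r)
  rw [VanishesAt, coeffPoint_congr (mul_sub (X ^ k) a' a ▸ ha.mul_left _) (hle.trans hg)
    (hle.trans hh) (hle.trans (mul_sub (X ^ e) b' b ▸ hb.mul_left _))]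
  exact H

lemma of_eventually [Infinite F] {σ : Type*} {a g h b : (σ → F) → F[X]} (ha : IsPolyFamily a)
    (hg : IsPolyFamily g) (hh : IsPolyFamily h) (hb : IsPolyFamily b)
    (H : ∀ᶠ z in genericFilter σ F, VanishesAt f k e (a z) (g z) (h z) (b z)) (z : σ → F) :
    VanishesAt f k e (a z) (g z) (h z) (b z) := by
  obtain ⟨P, hP : ∀ z, P.map (MvPolynomial.eval z) = X ^ k * a z⟩ :=
    (IsPolyFamily.const (X ^ k)).mul ha
  obtain ⟨G, hG⟩ := hg
  obtain ⟨H', hH⟩ := hh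
  obtain ⟨Q, hQ : ∀ z, Q.map (MvPolynomial.eval z) = X ^ e * b z⟩ :=
    (IsPolyFamily.const (X ^ e)).mul hb
  have hbind (z : σ → F) : MvPolynomial.eval (coeffPoint u r (X ^ k * a z) (g z) (h z)
      (X ^ e * b z)) f =
      MvPolynomial.eval z (MvPolynomial.bind₁ (coeffPoint u r P G H' Q) f) := by
    rw [← hP, ← hG, ← hH, ← hQ, ← map_coeffPoint]
    exact (MvPolynomial.eval₂Hom_bind₁ (RingHom.id F) z _ f).symm
  simp only [VanishesAt, hbind] at H ⊢
  rw [eq_zero_of_eventually_eval_eq_zero H, map_zero]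

lemma of_not_dvd_fst (H : ∀ S : Fin 4 → F[X],
      VanishesAt f k e (S 0) (S 0 * S 2) (S 1 * S 0) (S 1 * S 0 * S 2 + X ^ c * S 3))
    (hcu : c ≤ u) {a g h b : F[X]} (ha : ¬X ∣ a) (hD : X ^ c ∣ a * b - g * h) :
    VanishesAt f k e a g h b := by
  obtain ⟨x, y, hy, hx, hε⟩ := exists_offDiag_factor (i := 0) hcu (one_dvd a) (mt X_dvd_iff.2 ha)
    (one_dvd g) (one_dvd h) hD
  obtain ⟨z, hz⟩ := prime_X.pow_dvd_of_dvd_mul_left c ha hε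
  refine (H ![a, x, y, z]).congr ?_ ?_ ?_ ?_
  · simp
  · simpa using hy
  · simpa using hx
  · simp [← hz]

lemma of_dvd_offDiag [Infinite F]
    (H : ∀ a g h b : F[X], ¬X ∣ a → X ^ c ∣ a * b - g * h → VanishesAt f k e a g h b)
    {a ε : F[X]} (x y : F[X]) (hε : X ^ c ∣ a * ε) :
    VanishesAt f k e a (a * y) (x * a) (x * a * y + ε) := by
  have hs : IsPolyFamily fun z : Unit → F => C (z ()) := .param ()
  have ha : IsPolyFamily fun z : Unit → F => a + C (z ()) * C (z ()) :=
    (IsPolyFamily.const a).add (hs.mul hs)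
  have hy : IsPolyFamily fun z : Unit → F => (a + C (z ()) * C (z ())) * y + C (z ()) :=
    (ha.mul (.const y)).add hs
  have hx : IsPolyFamily fun z : Unit → F => x * (a + C (z ()) * C (z ())) + C (z ()) * ε :=
    ((IsPolyFamily.const x).mul ha).add (hs.mul (.const ε))
  have hb : IsPolyFamily fun z : Unit → F =>
      x * (a + C (z ()) * C (z ())) * y + C (z ()) * (x + y * ε) + ε :=
    ((((IsPolyFamily.const x).mul ha).mul (.const y)).add (hs.mul (.const _))).add (.const ε)
  have hunit : ∃ z : F, (a + C z * C z).coeff 0 ≠ 0 := by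
    by_contra! h0
    have h1 := h0 1
    rw [coeff_add, show a.coeff 0 = 0 by simpa using h0 0] at h1
    simp at h1
  obtain ⟨z₀, hz₀⟩ := hunit
  have hlim := of_eventually ha hy hx hb
    ((ha.eventually_coeff_ne_zero (z₀ := fun _ => z₀) hz₀).mono fun z hz =>
      H _ _ _ _ (mt X_dvd_iff.1 hz) ?_) 0
  · simpa using hlim
  · convert hε using 1
    ring

lemma of_coeff_ne_zero
    (H : ∀ a ε x y : F[X], X ^ c ∣ a * ε → VanishesAt f k e a (a * y) (x * a) (x * a * y + ε))
    (hcu : c ≤ u) {a g h b : F[X]} {i : ℕ} (ha : X ^ i ∣ a) (hai : a.coeff i ≠ 0)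
    (hg : X ^ i ∣ g) (hh : X ^ i ∣ h) (hD : X ^ c ∣ a * b - g * h) : VanishesAt f k e a g h b := by
  obtain ⟨x, y, hy, hx, hε⟩ := exists_offDiag_factor hcu ha hai hg hh hD
  refine (H a _ x y hε).congr ?_ hy hx ?_ <;> simp

lemma of_X_pow_dvd_det [Infinite F]
    (H : ∀ a ε x y : F[X], X ^ c ∣ a * ε → VanishesAt f k e a (a * y) (x * a) (x * a * y + ε))
    (hcu : c ≤ u) {a g h b : F[X]} (hD : X ^ c ∣ a * b - g * h) : VanishesAt f k e a g h b := by
  by_cases h0 : ![a, g, h, b] = 0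
  · obtain ⟨rfl, rfl, rfl, rfl⟩ : a = 0 ∧ g = 0 ∧ h = 0 ∧ b = 0 := by simpa using h0
    simpa using H 0 0 0 0 (by simp)
  -- Adding multiples of the rows and columns of `(a, g; h, b)` to one another keeps the
  -- determinant and generically makes the order of `a` minimal among the four entries.
  obtain ⟨i, hdvd, hne⟩ := exists_X_pow_dvd_forall_and_coeff_ne_zero h0
  simp only [Fin.forall_fin_succ, Fin.exists_fin_succ, Matrix.cons_val_zero, Matrix.cons_val_succ,
    IsEmpty.forall_iff, IsEmpty.exists_iff, and_true, or_false] at hdvd hne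
  obtain ⟨ha, hg, hh, hb⟩ := hdvd
  have hs (j : Fin 2) : IsPolyFamily fun z : Fin 2 → F => C (z j) := .param j
  have hg' : IsPolyFamily fun z : Fin 2 → F => g + C (z 0) * b := (IsPolyFamily.const g).add
    ((hs 0).mul (.const b))
  have hh' : IsPolyFamily fun z : Fin 2 → F => h + C (z 1) * b := (IsPolyFamily.const h).add
    ((hs 1).mul (.const b))
  have ha' : IsPolyFamily fun z : Fin 2 → F => a + C (z 0) * h + C (z 1) * (g + C (z 0) * b) :=
    ((IsPolyFamily.const a).add ((hs 0).mul (.const h))).add ((hs 1).mul hg')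
  obtain ⟨z₀, hz₀⟩ : ∃ z : Fin 2 → F,
      (a + C (z 0) * h + C (z 1) * (g + C (z 0) * b)).coeff i ≠ 0 := by
    by_contra! hz
    have h00 := hz ![0, 0]
    have h10 := hz ![1, 0]
    have h01 := hz ![0, 1]
    have h11 := hz ![1, 1]
    simp_all
  have hlim := of_eventually ha' hg' hh' (.const b)
    ((ha'.eventually_coeff_ne_zero hz₀).mono fun z hz => of_coeff_ne_zero H hcu ?_ hz
      (dvd_add hg (hb.mul_left _)) (dvd_add hh (hb.mul_left _)) ?_) 0
  · simpa using hlim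
  · exact dvd_add (dvd_add ha (hh.mul_left _)) ((dvd_add hg (hb.mul_left _)).mul_left _)
  · convert hD using 1
    ring

end VanishesAt

end

lemma exists_isPolyFamily_eq (F ι : Type*) [Field F] (N : ℕ) :
    ∃ S : (ι × Fin N → F) → ι → F[X], (∀ i, IsPolyFamily fun z => S z i) ∧
      ∀ T : ι → F[X], (∀ i, (T i).natDegree < N) → ∃ z, S z = T := by
  refine ⟨fun z i => ∑ n, C (z (i, n)) * X ^ (n : ℕ),
    fun i => .sum _ fun n => (IsPolyFamily.param (i, n)).mul (.const (X ^ (n : ℕ))),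
    fun T hT => ⟨fun j => (T j.1).coeff j.2, funext fun i => ?_⟩⟩
  refine (Fin.sum_univ_eq_sum_range (fun n => C ((T i).coeff n) * X ^ n) N).trans ?_
  exact ((T i).as_sum_range_C_mul_X_pow' (hT i)).symm

section

variable {F : Type*} [Field F] {u r k l e c : ℕ}

lemma diagEntry_zero_right {R : Type*} [CommRing R] (a b : R) (s : ℕ) :
    diagEntry a b 0 s = a ^ s := by
  induction s with
  | zero => rw [diagEntry_zero, pow_zero]
  | succ s ih => rw [diagEntry_succ, ih, zero_mul, add_zero, pow_succ']

lemma coeff_diagEntry_X_pow_zero {b : F[X]} {s : ℕ} (hs : s * k ≤ entryOrder r k e s) :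
    (diagEntry (X ^ k) b 0 s).coeff (entryOrder r k e s) = 1 := by
  rw [diagEntry_zero_right, ← pow_mul, mul_comm k,
    show entryOrder r k e s = s * k from le_antisymm (min_le_left _ _) hs, coeff_X_pow_self]

lemma coeff_diagEntry_X_pow_X_pow {s : ℕ} (hke : k + e ≤ r) (hs : entryOrder r k e s < s * k) :
    (diagEntry (X ^ k : F[X]) (X ^ e) (X ^ r) s).coeff (entryOrder r k e s) = 1 := by
  obtain _ | _ | t := s
  · simp at hs
  · rw [zero_add, entryOrder_one (by omega)] at hs
    omega
  obtain ⟨horder, hlt⟩ : entryOrder r k e (t + 2) = t * e + r ∧ t * e + r < (t + 2) * k := by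
    change min ((t + 2) * k) (r + t * e) < (t + 2) * k at hs
    change min ((t + 2) * k) (r + t * e) = _ ∧ _
    omega
  have hek : e < k := by
    by_contra! h
    have := Nat.mul_le_mul_left t h
    rw [add_mul] at hlt
    omega
  have hXe {n : ℕ} (hn : e + (e + 1) ≤ n) : (X ^ e) ^ 2 * X ∣ (X ^ n : F[X]) :=
    (show (X ^ e) ^ 2 * X = (X ^ (e + (e + 1)) : F[X]) by ring).dvd.trans (pow_dvd_pow X hn)
  obtain ⟨y, hy, hdvd⟩ := exists_diagEntry_eq_pow_add (p := (X ^ e : F[X])) (a := X ^ k)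
    (b := X ^ e) (w := X ^ r) (pow_succ (X : F[X]) e ▸ pow_dvd_pow X hek) dvd_rfl
    (dvd_sub (pow_add (X : F[X]) k e ▸ hXe (by omega)) (hXe (by omega))) t
  have hyc : y.coeff (t * e) = 1 := by
    rw [← pow_mul, mul_comm e, ← pow_succ] at hdvd
    rw [sub_eq_zero.1 ((coeff_sub _ _ _).symm.trans (X_pow_dvd_iff.1 hdvd _ (by omega))),
      coeff_X_pow_self]
  rw [horder, hy, coeff_add, coeff_X_pow_mul, hyc, ← pow_mul, coeff_X_pow, if_neg, zero_add]
  exact mul_comm k _ ▸ hlt.ne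

theorem VanishesAt.of_hasKernelProfile [Infinite F] {f : MvPolynomial (Vars u r) F} {v : ℕ}
    (hk : 1 ≤ k) (hkr : k < r) (hl : 1 ≤ l) (he : e = min l (r - k)) (hc : c = k + l - r)
    (H : ∀ a g h b : F[X], HasKernelProfile v r k l e (X ^ k * a) g h (X ^ e * b) →
      VanishesAt f k e a g h b) (T : Fin 4 → F[X]) :
    VanishesAt f k e (T 0) (T 0 * T 2) (T 1 * T 0) (T 1 * T 0 * T 2 + X ^ c * T 3) := by
  obtain ⟨S, hS, hsurj⟩ := exists_isPolyFamily_eq F (Fin 4) (Finset.univ.sup (natDegree ∘ T) + 1)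
  obtain ⟨z₀, hz₀⟩ := hsurj T fun i =>
    Nat.lt_succ_of_le (Finset.le_sup (f := natDegree ∘ T) (Finset.mem_univ i))
  obtain ⟨z₁, hz₁⟩ := hsurj ![1, 0, 0, 1] (by simp [Fin.forall_fin_succ])
  obtain ⟨z₂, hz₂⟩ := hsurj ![1, 1, 1, 0] (by simp [Fin.forall_fin_succ])
  have hg := (hS 0).mul (hS 2)
  have hh := (hS 1).mul (hS 0)
  have hb := (hh.mul (hS 2)).add ((IsPolyFamily.const (X ^ c)).mul (hS 3))
  have ha' := (IsPolyFamily.const (X ^ k)).mul (hS 0)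
  have hb' := (IsPolyFamily.const (X ^ e)).mul hb
  have hw := ((IsPolyFamily.const (X ^ r)).mul hg).mul hh
  have hdet := ((ha'.mul hb').sub hw).eventually_coeff_ne_zero (z₀ := z₁) (n := k + l) (by
    simp [hz₁, ← pow_add, show k + (e + c) = k + l by omega])
  have hdiag (s : ℕ) := (ha'.diagEntry s hb' hw).eventually_coeff_ne_zero
    (n := entryOrder r k e s) (z₀ := if s * k ≤ entryOrder r k e s then z₁ else z₂) (by
      split_ifs with hs
      · simp [hz₁, coeff_diagEntry_X_pow_zero hs]
      · simp [hz₂, coeff_diagEntry_X_pow_X_pow (show k + e ≤ r by omega) (not_le.1 hs)])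
  have hlim := of_eventually (f := f) (k := k) (e := e) (hS 0) hg hh hb
    ((hdet.and ((Filter.eventually_all_finset (Finset.range (r + v))).2 fun s _ => hdiag s)).mono
      fun z ⟨hz, hzs⟩ => H _ _ _ _ (.of_coeff_ne_zero hk (by omega) (by omega) (by omega)
        (dvd_mul_right _ _) (dvd_mul_right _ _) ((X_pow_dvd_det_iff he hkr.le).2 ?_) hz
        fun s hs => hzs s (Finset.mem_range.2 hs))) z₀
  · simpa only [hz₀] using hlim
  · rw [← hc]
    exact Dvd.intro (S z 0 * S z 3) (by ring)

end

section

variable {F : Type*} [Field F] {u r k l e : ℕ}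

lemma mem_zClosure {S : Set (Vars u r → F)} {x : Vars u r → F}
    (hx : ∀ f : MvPolynomial (Vars u r) F, (∀ y ∈ S, MvPolynomial.eval y f = 0) →
      MvPolynomial.eval x f = 0) : x ∈ zClosure F u r S := by
  rintro _ ⟨⟨T, rfl⟩, hST⟩ f hf
  exact hx f fun y hy => hST hy f hf

lemma zClosure_subset {S C : Set (Vars u r → F)} (hC : IsZClosed F u r C) (h : S ⊆ C) :
    zClosure F u r S ⊆ C :=
  Set.sInter_subset_of_mem ⟨hC, h⟩

lemma jordanTypeIs_Mx_subset_Xlocus (hru : r < u) (hk : 1 ≤ k) (hkr : k < r) (hl : l ≤ u - r)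
    (he : e = min l (r - k)) {P : Multiset ℕ}
    (hP : kernelFun P = kernelProfile (u - r) r k l e) :
    {x | JordanTypeIs F (Mx F u r hru.le x) P} ⊆ Xlocus F u r k l := by
  intro x hx
  have H : HasKernelProfile (u - r) r k l e (paOf F u r x) (pgOf F u r x) (phOf F u r x)
      (pbOf F u r x) := (jordanTypeIs_Mmap_iff hru.le hP).1 hx
  rw [← coeffPoint_paOf x, coeffPoint_mem_Xlocus_iff he hru hk hkr hl (X_dvd_paOf x) (X_dvd_pbOf x)]
  exact ⟨H.X_pow_dvd_fst (by omega) (by omega) hl, H.X_pow_dvd_snd hk (by omega) (by omega) hl,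
    H.X_pow_dvd_det hkr.le hl⟩

lemma Xlocus_subset_zClosure [Infinite F] (hru : r < u) (hk : 1 ≤ k) (hkr : k < r) (hl : 1 ≤ l)
    (hlu : l ≤ u - r) (he : e = min l (r - k)) {P : Multiset ℕ}
    (hP : kernelFun P = kernelProfile (u - r) r k l e) :
    Xlocus F u r k l ⊆ zClosure F u r {x | JordanTypeIs F (Mx F u r hru.le x) P} := by
  intro x hx
  refine mem_zClosure fun f hf => ?_
  have hprofile (a g h b : F[X])
      (H : HasKernelProfile (u - r) r k l e (X ^ k * a) g h (X ^ e * b)) :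
      VanishesAt f k e a g h b := by
    refine hf _ ?_
    rw [Set.mem_ofPred_eq, Mx_coeffPoint hru g h ((dvd_pow_self X (by omega)).mul_right a)
      ((dvd_pow_self X (by omega)).mul_right b)]
    exact (jordanTypeIs_Mmap_iff hru.le hP).2 H
  rw [← coeffPoint_paOf x,
    coeffPoint_mem_Xlocus_iff he hru hk hkr hlu (X_dvd_paOf x) (X_dvd_pbOf x)] at hx
  obtain ⟨⟨a, ha⟩, ⟨b, hb⟩, hD⟩ := hx
  rw [ha, hb, X_pow_dvd_det_iff he hkr.le] at hD
  rw [← coeffPoint_paOf x, ha, hb]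
  have hcu : k + l - r ≤ u := by omega
  exact VanishesAt.of_X_pow_dvd_det (fun _ _ x y => .of_dvd_offDiag (fun _ _ _ _ =>
    .of_not_dvd_fst (.of_hasKernelProfile hk hkr hl he rfl hprofile) hcu) x y) hcu hD

end

/-- For a stable partition `Q = (u, u-r)` and `P` the partition whose
Burge code is `α^{u−r−l} β^l α^{r−k} β^k α`, the Zariski closure in `F^N` of the locus
`W^Q_{k,l}` of points `x` whose endomorphism `M_x` has Jordan type `P` is exactly the
zero locus `X^Q_{k,l}` of `E^Q_{k,l}`. (`false = α`, `true = β`.) -/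
theorem statement0 (F : Type*) [Field F] [Infinite F] (u r k l : ℕ)
    (hru : r < u) (hr : 2 ≤ r) (hk1 : 1 ≤ k) (hk2 : k ≤ r - 1)
    (hl1 : 1 ≤ l) (hl2 : l ≤ u - r)
    (P : Multiset ℕ) (hPpos : 0 ∉ P)
    (hcode : burgeCode P =
      List.replicate (u - r - l) false ++ List.replicate l true ++
        List.replicate (r - k) false ++ List.replicate k true ++ [false]) :
    zClosure F u r {x | JordanTypeIs F (Mx F u r hru.le x) P} = Xlocus F u r k l := by
  have hkr : k < r := by omega
  have hP : kernelFun P = kernelProfile (u - r) r k l (min l (r - k)) := by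
    have hburge := hasBurgeCode_burgeCode hPpos
    rw [hcode] at hburge
    rw [kernelFun_eq_kernelProfile hkr hburge, Nat.add_sub_cancel' hl2]
  refine (zClosure_subset ⟨_, rfl⟩ ?_).antisymm ?_
  · exact jordanTypeIs_Mx_subset_Xlocus hru hk1 hkr hl2 rfl hP
  · exact Xlocus_subset_zClosure hru hk1 hkr hl1 hl2 rfl hP
end

section
/- Let F be an infinite field, let u > r ≥ 2 be integers, and let 1 ≤ k ≤ r−1 and 1 ≤ l ≤ u−r. Then the ideal generated by the set of polynomials E^Q_{k,l} in the polynomial ring F[a_1,…,a_{u−1}, b_1,…,b_{u−r−1}, g_0,…,g_{u−r−1}, h_0,…,h_{u−r−1}] is a prime ideal. -/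
open Polynomial

/-!
If `k + l ≤ r`, the ideal is generated by variables. Otherwise, killing the variables of `Eset`,
renumbering the remaining `a_i` and `b_i` and absorbing the sign into the `g_i` leaves the ideal
generated by the coefficients `f_0, …, f_n` of `a(t) * b(t) + g(t) * h(t)`, for
`n = k + l - r - 1`.

Assign to `a_i`, `b_i`, `g_i`, `h_i` the positions `2i + 2`, `2i`, `2i + 1`, `2i + 1`. For a
weight strictly concave in the position, the leading monomial of `f_m` is the one whose two
variables both have position `m + 1`. These leading monomials are pairwise coprime and do not
involve `b_0`. In each monomial, replacing the powers of the leading monomials by powers of the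
`f_m` is a bijective linear map, being unitriangular for the weight, and it carries the monomial
ideal to the ideal of the `f_m`. Hence `b_0` is a nonzerodivisor modulo the latter. Once `b_0` is
inverted, the equations determine `a_0, …, a_n`, so the ideal is the kernel of evaluation at the
generic point `a = -gh/b`.
-/

noncomputable section

open MvPolynomial

section Filtration

theorem bijective_of_sub_mem_filtration {R V : Type*} [Ring R] [AddCommGroup V] [Module R V]
    (Φ : V →ₗ[R] V) (W : ℕ → Submodule R V) (hbot : W 0 = ⊥) (hexh : ∀ x, ∃ D, x ∈ W D)
    (hΦ : ∀ D, ∀ x ∈ W (D + 1), Φ x - x ∈ W D) : Function.Bijective Φ := by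
  constructor
  · rw [injective_iff_map_eq_zero]
    intro x hx
    obtain ⟨D, hD⟩ := hexh x
    induction D with
    | zero => simpa [hbot] using hD
    | succ D ih => exact ih (by simpa [hx] using hΦ D x hD)
  · intro x
    obtain ⟨D, hD⟩ := hexh x
    induction D generalizing x with
    | zero => exact ⟨0, by simpa [hbot, eq_comm] using hD⟩
    | succ D ih =>
      obtain ⟨y, hy⟩ := ih _ (hΦ D x hD)
      exact ⟨x - y, by rw [map_sub, hy, sub_sub_cancel]⟩

end Filtration

section LeadingMonomial

variable {R σ : Type*} [CommRing R] {w : σ → ℕ} {p q : MvPolynomial σ R} {d e : σ →₀ ℕ}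

/-- The submodule of polynomials all of whose monomials have `w`-weight less than `D`. These
submodules form the filtration with respect to which leading monomials are taken. -/
def weightLT (R : Type*) [CommRing R] (w : σ → ℕ) (D : ℕ) :
    Submodule R (MvPolynomial σ R) :=
  restrictSupport R {d | Finsupp.weight w d < D}

/-- `p` is monic with leading monomial `d` for the weight `w`: all its other monomials have smaller
weight. Ties are not broken, so not every polynomial has a leading monomial. -/
def HasLeadingMonomial (w : σ → ℕ) (p : MvPolynomial σ R) (d : σ →₀ ℕ) : Prop :=
  p - MvPolynomial.monomial d 1 ∈ weightLT R w (Finsupp.weight w d)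

lemma weightLT_mono {D E : ℕ} (h : D ≤ E) : weightLT R w D ≤ weightLT R w E :=
  restrictSupport_mono R fun _ hd => lt_of_lt_of_le hd h

lemma weightLT_zero : weightLT R w 0 = ⊥ := by
  simp [weightLT, restrictSupport_eq_span]

lemma exists_mem_weightLT (w : σ → ℕ) (p : MvPolynomial σ R) : ∃ D, p ∈ weightLT R w D :=
  ⟨p.support.sup (Finsupp.weight w) + 1, fun _ hd =>
    Nat.lt_succ_of_le (Finset.le_sup (f := Finsupp.weight w) hd)⟩

lemma monomial_mem_weightLT {D : ℕ} (h : Finsupp.weight w d < D) (c : R) :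
    MvPolynomial.monomial d c ∈ weightLT R w D :=
  (monomial_mem_restrictSupport R).2 (Or.inl h)

lemma mul_mem_weightLT {D E : ℕ} (hp : p ∈ weightLT R w (D + 1)) (hq : q ∈ weightLT R w E) :
    p * q ∈ weightLT R w (D + E) := by
  have hpq := Submodule.mul_mem_mul hp hq
  rw [weightLT, weightLT, ← restrictSupport_add] at hpq
  refine restrictSupport_mono R ?_ hpq
  rintro _ ⟨a, ha, b, hb, rfl⟩
  simp only [Set.mem_ofPred_eq, map_add] at ha hb ⊢
  omega

namespace HasLeadingMonomial

lemma monomial (w : σ → ℕ) (d : σ →₀ ℕ) :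
    HasLeadingMonomial w (MvPolynomial.monomial d (1 : R)) d := by
  rw [HasLeadingMonomial, sub_self]
  exact zero_mem _

lemma one (w : σ → ℕ) : HasLeadingMonomial w (1 : MvPolynomial σ R) 0 :=
  monomial w 0

lemma mul (hp : HasLeadingMonomial w p d) (hq : HasLeadingMonomial w q e) :
    HasLeadingMonomial w (p * q) (d + e) := by
  have hp' : p ∈ weightLT R w (Finsupp.weight w d + 1) := by
    rw [← sub_add_cancel p (MvPolynomial.monomial d 1)]
    exact add_mem (weightLT_mono (Nat.le_succ _) hp) (monomial_mem_weightLT (Nat.lt_succ_self _) 1)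
  have hsplit : p * q - MvPolynomial.monomial (d + e) 1 =
      p * (q - MvPolynomial.monomial e 1) +
        MvPolynomial.monomial e 1 * (p - MvPolynomial.monomial d 1) := by
    rw [← one_mul (1 : R), ← MvPolynomial.monomial_mul, one_mul]
    ring
  rw [HasLeadingMonomial, hsplit, map_add]
  refine add_mem (mul_mem_weightLT hp' hq) ?_
  rw [add_comm]
  exact mul_mem_weightLT (monomial_mem_weightLT (Nat.lt_succ_self _) 1) hp

lemma pow (hp : HasLeadingMonomial w p d) (n : ℕ) : HasLeadingMonomial w (p ^ n) (n • d) := by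
  induction n with
  | zero => simpa using one w
  | succ n ih => simpa only [pow_succ, succ_nsmul] using ih.mul hp

lemma prod {ι : Type*} {f : ι → MvPolynomial σ R} {M : ι → σ →₀ ℕ} (s : Finset ι)
    (h : ∀ i ∈ s, HasLeadingMonomial w (f i) (M i)) :
    HasLeadingMonomial w (∏ i ∈ s, f i) (∑ i ∈ s, M i) := by
  classical
  induction s using Finset.induction_on with
  | empty => simpa using one w
  | insert i s hi ih =>
    rw [Finset.prod_insert hi, Finset.sum_insert hi]
    exact (h i (by simp)).mul (ih fun j hj => h j (by simp [hj]))

end HasLeadingMonomial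

theorem bijective_of_hasLeadingMonomial (w : σ → ℕ)
    (Φ : MvPolynomial σ R →ₗ[R] MvPolynomial σ R)
    (h : ∀ d, HasLeadingMonomial w (Φ (MvPolynomial.monomial d 1)) d) : Function.Bijective Φ := by
  refine bijective_of_sub_mem_filtration Φ (weightLT R w) weightLT_zero (exists_mem_weightLT w)
    fun D p hp => ?_
  suffices hle : weightLT R w (D + 1) ≤ (weightLT R w D).comap (Φ - LinearMap.id) from hle hp
  rw [weightLT, restrictSupport_eq_span, Submodule.span_le]
  rintro _ ⟨d, hd, rfl⟩
  exact weightLT_mono (Nat.lt_succ_iff.1 hd) (h d)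

end LeadingMonomial

section Straightening

variable {R σ ι : Type*} [CommRing R]

/-- The multiplicity of the monomial `M` in the monomial `d`: the largest `e` with `e • M ≤ d`
(for `M = 0`, where there is no largest one, the value is the degree of `d`). -/
def monomialMultiplicity (M d : σ →₀ ℕ) : ℕ := by
  classical exact Nat.findGreatest (fun e => e • M ≤ d) d.degree

lemma le_monomialMultiplicity_iff {M d : σ →₀ ℕ} (hM : M ≠ 0) {e : ℕ} :
    e ≤ monomialMultiplicity M d ↔ e • M ≤ d := by
  classical
  constructor
  · intro h
    exact (nsmul_le_nsmul_left (zero_le) h).trans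
      (Nat.findGreatest_spec (P := fun e => e • M ≤ d) (Nat.zero_le _) (by simp))
  · intro h
    refine Nat.le_findGreatest ?_ h
    have hdeg : 1 ≤ M.degree :=
      Nat.one_le_iff_ne_zero.2 (mt (Finsupp.degree_eq_zero_iff M).1 hM)
    calc e ≤ e * M.degree := Nat.le_mul_of_pos_right _ hdeg
      _ = (e • M).degree := by simp
      _ ≤ d.degree := Finsupp.degree_mono h

lemma apply_eq_zero_or_of_disjoint {M N : σ →₀ ℕ} (h : Disjoint M N) (s : σ) :
    M s = 0 ∨ N s = 0 := by
  have hs := DFunLike.congr_fun (disjoint_iff.1 h) s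
  simp only [Finsupp.inf_apply, bot_eq_zero, Finsupp.coe_zero, Pi.zero_apply] at hs
  omega

lemma le_add_iff_of_disjoint {M N d : σ →₀ ℕ} (h : Disjoint M N) : M ≤ N + d ↔ M ≤ d := by
  refine ⟨fun hle s => ?_, fun hle => hle.trans le_add_self⟩
  have hs : M s ≤ N s + d s := hle s
  rcases apply_eq_zero_or_of_disjoint h s with h0 | h0 <;> omega

lemma add_le_of_disjoint {M N d : σ →₀ ℕ} (h : Disjoint M N) (hM : M ≤ d) (hN : N ≤ d) :
    M + N ≤ d := by
  intro s
  have hMs := hM s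
  have hNs := hN s
  rw [Finsupp.add_apply]
  rcases apply_eq_zero_or_of_disjoint h s with h0 | h0 <;> omega

lemma sum_le_of_pairwise_disjoint {M : ι → σ →₀ ℕ} {d : σ →₀ ℕ}
    (hdisj : Pairwise fun i j => Disjoint (M i) (M j)) (hle : ∀ i, M i ≤ d) (s : Finset ι) :
    ∑ i ∈ s, M i ≤ d := by
  classical
  induction s using Finset.induction_on with
  | empty => simp
  | insert i s hi ih =>
    rw [Finset.sum_insert hi]
    refine add_le_of_disjoint ?_ (hle i) ih
    rw [Finsupp.disjoint_iff]
    refine Disjoint.mono_right Finsupp.support_finsetSum ?_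
    rw [Finset.disjoint_biUnion_right]
    exact fun j hj => Finsupp.disjoint_iff.1 (hdisj (ne_of_mem_of_not_mem hj hi).symm)

lemma disjoint_nsmul_left {M N : σ →₀ ℕ} (h : Disjoint M N) (e : ℕ) : Disjoint (e • M) N := by
  rw [Finsupp.disjoint_iff] at h ⊢
  exact h.mono_left Finsupp.support_smul

lemma monomialMultiplicity_add_of_disjoint {M N : σ →₀ ℕ} (hM : M ≠ 0) (h : Disjoint M N)
    (d : σ →₀ ℕ) : monomialMultiplicity M (N + d) = monomialMultiplicity M d :=
  eq_of_forall_le_iff fun e => by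
    rw [le_monomialMultiplicity_iff hM, le_monomialMultiplicity_iff hM,
      le_add_iff_of_disjoint (disjoint_nsmul_left h e)]

lemma monomialMultiplicity_self_add {M : σ →₀ ℕ} (hM : M ≠ 0) (d : σ →₀ ℕ) :
    monomialMultiplicity M (M + d) = monomialMultiplicity M d + 1 :=
  eq_of_forall_le_iff fun e => by
    cases e with
    | zero => simp
    | succ e =>
      rw [Nat.add_le_add_iff_right, le_monomialMultiplicity_iff hM, le_monomialMultiplicity_iff hM,
        succ_nsmul', add_le_add_iff_left]

variable [Fintype ι] {M : ι → σ →₀ ℕ}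

/-- The product of the powers of the monomials `M i` that divide the monomial `d`, written
additively. -/
def monomialPart (M : ι → σ →₀ ℕ) (d : σ →₀ ℕ) : σ →₀ ℕ :=
  ∑ i, monomialMultiplicity (M i) d • M i

/-- The linear map sending a monomial `∏ i, M i ^ e i * m`, with `e i` the multiplicity of `M i`,
to `∏ i, f i ^ e i * m`. It transports questions on the ideal generated by the `f i` to the
monomial ideal generated by the `M i`. -/
def straighten (M : ι → σ →₀ ℕ) (f : ι → MvPolynomial σ R) :
    MvPolynomial σ R →ₗ[R] MvPolynomial σ R :=
  (basisMonomials σ R).constr R fun d =>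
    (∏ i, f i ^ monomialMultiplicity (M i) d) * MvPolynomial.monomial (d - monomialPart M d) 1

lemma straighten_monomial (M : ι → σ →₀ ℕ) (f : ι → MvPolynomial σ R) (d : σ →₀ ℕ) :
    straighten M f (MvPolynomial.monomial d 1) =
      (∏ i, f i ^ monomialMultiplicity (M i) d) *
        MvPolynomial.monomial (d - monomialPart M d) 1 := by
  simpa only [straighten, MvPolynomial.coe_basisMonomials] using
    (basisMonomials σ R).constr_basis R _ d

lemma straighten_mul_of_forall_monomial {f : ι → MvPolynomial σ R} {m : σ →₀ ℕ}
    {y : MvPolynomial σ R}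
    (h : ∀ d, straighten M f (MvPolynomial.monomial (m + d) 1) =
      y * straighten M f (MvPolynomial.monomial d 1)) (p : MvPolynomial σ R) :
    straighten M f (MvPolynomial.monomial m 1 * p) = y * straighten M f p := by
  have hcomp : straighten M f ∘ₗ LinearMap.mulLeft R (MvPolynomial.monomial m (1 : R)) =
      LinearMap.mulLeft R y ∘ₗ straighten M f :=
    (basisMonomials σ R).ext fun d => by
      simpa only [MvPolynomial.coe_basisMonomials, LinearMap.comp_apply, LinearMap.mulLeft_apply,
        MvPolynomial.monomial_mul, one_mul] using h d
  exact LinearMap.congr_fun hcomp p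

lemma monomialPart_le (hM : ∀ i, M i ≠ 0) (hdisj : Pairwise fun i j => Disjoint (M i) (M j))
    (d : σ →₀ ℕ) : monomialPart M d ≤ d := by
  refine sum_le_of_pairwise_disjoint (fun i j hij => ?_)
    (fun i => (le_monomialMultiplicity_iff (hM i)).1 le_rfl) _
  exact disjoint_nsmul_left (disjoint_nsmul_left (hdisj hij).symm _).symm _

lemma straighten_monomial_mul (hM : ∀ i, M i ≠ 0)
    (hdisj : Pairwise fun i j => Disjoint (M i) (M j)) (f : ι → MvPolynomial σ R) {m : σ →₀ ℕ}
    (hm : ∀ i, Disjoint (M i) m) (p : MvPolynomial σ R) :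
    straighten M f (MvPolynomial.monomial m 1 * p) =
      MvPolynomial.monomial m 1 * straighten M f p := by
  refine straighten_mul_of_forall_monomial (fun d => ?_) p
  have hmult : ∀ i, monomialMultiplicity (M i) (m + d) = monomialMultiplicity (M i) d :=
    fun i => monomialMultiplicity_add_of_disjoint (hM i) (hm i) d
  have hpart : monomialPart M (m + d) = monomialPart M d := by
    simp only [monomialPart, hmult]
  rw [straighten_monomial, straighten_monomial, hpart,
    add_tsub_assoc_of_le (monomialPart_le hM hdisj d), ← one_mul (1 : R),
    ← MvPolynomial.monomial_mul, one_mul]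
  simp only [hmult]
  ring

lemma straighten_leading_mul (hM : ∀ i, M i ≠ 0)
    (hdisj : Pairwise fun i j => Disjoint (M i) (M j)) (f : ι → MvPolynomial σ R) (j : ι)
    (p : MvPolynomial σ R) :
    straighten M f (MvPolynomial.monomial (M j) 1 * p) = f j * straighten M f p := by
  classical
  refine straighten_mul_of_forall_monomial (fun d => ?_) p
  have hmult : ∀ i, monomialMultiplicity (M i) (M j + d) =
      (if i = j then 1 else 0) + monomialMultiplicity (M i) d := by
    intro i
    split_ifs with hij
    · rw [hij, monomialMultiplicity_self_add (hM j), add_comm]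
    · rw [monomialMultiplicity_add_of_disjoint (hM i) (hdisj hij), zero_add]
  have hpart : monomialPart M (M j + d) = M j + monomialPart M d := by
    simp [monomialPart, hmult, add_smul, Finset.sum_add_distrib, ite_smul]
  have hprod : ∏ i, f i ^ monomialMultiplicity (M i) (M j + d) =
      f j * ∏ i, f i ^ monomialMultiplicity (M i) d := by
    simp only [hmult, pow_add, Finset.prod_mul_distrib, pow_ite, pow_one, pow_zero,
      Finset.prod_ite_eq', Finset.mem_univ, if_true]
  rw [straighten_monomial, straighten_monomial, hpart, hprod, add_tsub_add_eq_tsub_left, mul_assoc]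

lemma straighten_bijective (hM : ∀ i, M i ≠ 0)
    (hdisj : Pairwise fun i j => Disjoint (M i) (M j)) {w : σ → ℕ} {f : ι → MvPolynomial σ R}
    (hf : ∀ i, HasLeadingMonomial w (f i) (M i)) : Function.Bijective (straighten M f) := by
  refine bijective_of_hasLeadingMonomial w _ fun d => ?_
  rw [straighten_monomial]
  have hlead := (HasLeadingMonomial.prod Finset.univ
    fun i _ => (hf i).pow (monomialMultiplicity (M i) d)).mul
      (HasLeadingMonomial.monomial w (d - monomialPart M d))
  rwa [← monomialPart, add_tsub_cancel_of_le (monomialPart_le hM hdisj d)] at hlead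

theorem straighten_mem_span_iff (hM : ∀ i, M i ≠ 0)
    (hdisj : Pairwise fun i j => Disjoint (M i) (M j)) {w : σ → ℕ} {f : ι → MvPolynomial σ R}
    (hf : ∀ i, HasLeadingMonomial w (f i) (M i)) {p : MvPolynomial σ R} :
    straighten M f p ∈ Ideal.span (Set.range f) ↔
      p ∈ Ideal.span (Set.range fun i => MvPolynomial.monomial (M i) (1 : R)) := by
  have hbij := straighten_bijective hM hdisj hf
  have himage (c : ι → MvPolynomial σ R) :
      straighten M f (∑ i, c i * MvPolynomial.monomial (M i) 1) =
        ∑ i, straighten M f (c i) * f i := by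
    simp only [map_sum, mul_comm (c _), straighten_leading_mul hM hdisj,
      mul_comm (straighten M f _)]
  simp only [Ideal.mem_span_range_iff_exists_fun]
  constructor
  · rintro ⟨c, hc⟩
    choose c' hc' using fun i => hbij.2 (c i)
    exact ⟨c', hbij.1 (by simp only [himage, hc', hc])⟩
  · rintro ⟨c, rfl⟩
    exact ⟨fun i => straighten M f (c i), (himage c).symm⟩

lemma mem_span_monomial_of_monomial_mul_mem {κ : Type*} {M : κ → σ →₀ ℕ} {m : σ →₀ ℕ}
    (hm : ∀ i, Disjoint (M i) m) {p : MvPolynomial σ R} (hp : MvPolynomial.monomial m 1 * p ∈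
      Ideal.span (Set.range fun i => MvPolynomial.monomial (M i) (1 : R))) :
    p ∈ Ideal.span (Set.range fun i => MvPolynomial.monomial (M i) (1 : R)) := by
  have hrange : (Set.range fun i => MvPolynomial.monomial (M i) (1 : R)) =
      (fun s => MvPolynomial.monomial s (1 : R)) '' Set.range M :=
    Set.range_comp (fun s => MvPolynomial.monomial s (1 : R)) M
  rw [hrange, mem_ideal_span_monomial_image] at hp ⊢
  intro d hd
  obtain ⟨_, ⟨i, rfl⟩, hi⟩ := hp (m + d) (by
    rwa [MvPolynomial.mem_support_iff, MvPolynomial.coeff_monomial_mul, one_mul,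
      ← MvPolynomial.mem_support_iff])
  exact ⟨M i, ⟨i, rfl⟩, (le_add_iff_of_disjoint (hm i)).1 hi⟩

theorem mem_span_of_monomial_mul_mem {κ : Type*} [Finite κ] {M : κ → σ →₀ ℕ}
    (hM : ∀ i, M i ≠ 0) (hdisj : Pairwise fun i j => Disjoint (M i) (M j)) {w : σ → ℕ}
    {f : κ → MvPolynomial σ R} (hf : ∀ i, HasLeadingMonomial w (f i) (M i)) {m : σ →₀ ℕ}
    (hm : ∀ i, Disjoint (M i) m) {g : MvPolynomial σ R}
    (hg : MvPolynomial.monomial m 1 * g ∈ Ideal.span (Set.range f)) :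
    g ∈ Ideal.span (Set.range f) := by
  cases nonempty_fintype κ
  obtain ⟨p, rfl⟩ := (straighten_bijective hM hdisj hf).2 g
  rw [← straighten_monomial_mul hM hdisj f hm, straighten_mem_span_iff hM hdisj hf] at hg
  exact (straighten_mem_span_iff hM hdisj hf).2 (mem_span_monomial_of_monomial_mul_mem hm hg)

end Straightening

section Primality

variable {R : Type*} [CommRing R]

theorem isPrime_of_sub_mem {A B Φ S : Type*} [CommRing A] [CommRing B] [FunLike Φ A B]
    [RingHomClass Φ A B] [FunLike S B A] [RingHomClass S B A] {I : Ideal A} {J : Ideal B}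
    (hJ : J.IsPrime) (φ : Φ) (s : S) (hφ : I ≤ J.comap φ) (hs : J ≤ I.comap s)
    (hsφ : ∀ p, p - s (φ p) ∈ I) : I.IsPrime := by
  suffices hI : I = J.comap φ from hI ▸ Ideal.comap_isPrime φ J
  refine le_antisymm hφ fun p hp => ?_
  rw [← sub_add_cancel p (s (φ p))]
  exact add_mem (hsφ p) (hs hp)

lemma sub_mem_of_forall_X_sub_mem {σ : Type*} {I : Ideal (MvPolynomial σ R)}
    (f : MvPolynomial σ R →ₐ[R] MvPolynomial σ R)
    (h : ∀ i, MvPolynomial.X i - f (MvPolynomial.X i) ∈ I) (p : MvPolynomial σ R) :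
    p - f p ∈ I := by
  have hcomp : Ideal.Quotient.mkₐ R I = (Ideal.Quotient.mkₐ R I).comp f :=
    MvPolynomial.algHom_ext fun i => Ideal.Quotient.eq.2 (h i)
  exact Ideal.Quotient.eq.1 (DFunLike.congr_fun hcomp p)

theorem isPrime_span_X_image [IsDomain R] {σ : Type*} (Z : Set σ) :
    (Ideal.span ((MvPolynomial.X : σ → MvPolynomial σ R) '' Z)).IsPrime := by
  classical
  let kill : MvPolynomial σ R →ₐ[R] MvPolynomial σ R :=
    MvPolynomial.aeval fun i => if i ∈ Z then 0 else MvPolynomial.X i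
  refine isPrime_of_sub_mem Ideal.isPrime_bot kill (RingHom.id _) ?_ bot_le
    (sub_mem_of_forall_X_sub_mem kill fun i => ?_)
  · rw [Ideal.span_le]
    rintro _ ⟨i, hi, rfl⟩
    simp [kill, hi]
  · by_cases hi : i ∈ Z
    · simpa [kill, hi] using Ideal.subset_span (Set.mem_image_of_mem MvPolynomial.X hi)
    · simp [kill, hi]

theorem injective_of_saturation_eq_top {A B : Type*} [CommRing A] [Algebra R A] [CommRing B]
    {S : Subalgebra R A} {M : Submonoid A} {hMS : M ≤ S.toSubmonoid}
    (hS : S.saturation M hMS = ⊤) (hM : M ≤ nonZeroDivisors A) {ψ : A →+* B}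
    (hψ : Set.InjOn ψ S) : Function.Injective ψ := by
  rw [injective_iff_map_eq_zero]
  intro x hx
  obtain ⟨m, hm, hmx⟩ : x ∈ S.saturation M hMS := hS ▸ Algebra.mem_top
  have hzero : m * x = 0 := hψ hmx S.zero_mem (by rw [map_mul, hx, mul_zero, map_zero])
  exact (mem_nonZeroDivisors_iff.1 (hM hm)).1 x hzero

theorem isPrime_of_saturation_eq_top {A B : Type*} [CommRing A] [Algebra R A] [CommRing B]
    [IsDomain B] [Algebra R B] {I : Ideal A} {T : Subalgebra R A} {y : A} (hyT : y ∈ T)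
    (hy : ∀ p, y * p ∈ I → p ∈ I) (ψ : A →ₐ[R] B) (hI : I ≤ RingHom.ker ψ)
    (hψ : Set.InjOn ψ T)
    (hgen : (T.map (Ideal.Quotient.mkₐ R I)).saturation
      (Submonoid.powers (Ideal.Quotient.mkₐ R I y))
      (Submonoid.powers_le.2 (Subalgebra.mem_map.2 ⟨y, hyT, rfl⟩)) = ⊤) : I.IsPrime := by
  have hnzd : Submonoid.powers (Ideal.Quotient.mkₐ R I y) ≤ nonZeroDivisors (A ⧸ I) := by
    refine Submonoid.powers_le.2 (mem_nonZeroDivisors_iff_right.2 fun x hx => ?_)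
    obtain ⟨p, rfl⟩ := Ideal.Quotient.mkₐ_surjective R I x
    rw [← map_mul, mul_comm] at hx
    exact Ideal.Quotient.eq_zero_iff_mem.2 (hy p (Ideal.Quotient.eq_zero_iff_mem.1 hx))
  have hinj : Function.Injective (Ideal.Quotient.liftₐ I ψ fun _ hp => hI hp) := by
    refine injective_of_saturation_eq_top
      (ψ := (Ideal.Quotient.liftₐ I ψ fun _ hp => hI hp).toRingHom) hgen hnzd ?_
    rintro _ ⟨p, hp, rfl⟩ _ ⟨q, hq, rfl⟩ hpq
    exact congrArg _ (hψ hp hq hpq)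
  exact (Ideal.Quotient.isDomain_iff_prime I).1 (hinj.isDomain _)

end Primality

/-- The variables `a i`, `b i`, `g i`, `h i`, for `i : ℕ`: the coefficients of `t ^ i` in four
generic power series. -/
inductive JetVar
  | a (i : ℕ)
  | b (i : ℕ)
  | g (i : ℕ)
  | h (i : ℕ)

namespace JetVar

/-- The position of a variable. The positions of the two variables in a monomial of `jetEq R m` add
up to `2 * m + 2`, and they are equal in exactly one of these monomials. -/
def pos : JetVar → ℕ
  | a i => 2 * i + 2
  | b i => 2 * i
  | g i => 2 * i + 1
  | h i => 2 * i + 1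

/-- A weight that is strictly concave in the position, for positions up to `2 * n + 2` (beyond,
the subtraction is truncated). By concavity, among the monomials of `jetEq R m` the one with equal
positions is the heaviest. -/
def weight (n : ℕ) (s : JetVar) : ℕ := (2 * n + 2) ^ 2 - s.pos ^ 2

end JetVar

open JetVar Finset.HasAntidiagonal

/-- The coefficient of `t ^ m` in `a(t) * b(t) + g(t) * h(t)`. -/
def jetEq (R : Type*) [CommRing R] (m : ℕ) : MvPolynomial JetVar R :=
  ∑ ij ∈ antidiagonal m,
    (MvPolynomial.X (a ij.1) * MvPolynomial.X (b ij.2) +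
      MvPolynomial.X (g ij.1) * MvPolynomial.X (h ij.2))

/-- The monomial of `jetEq R m` whose two variables have the same position, `m + 1`. -/
def jetLeadExp (m : ℕ) : JetVar →₀ ℕ :=
  if Even m then Finsupp.single (g (m / 2)) 1 + Finsupp.single (h (m / 2)) 1
  else Finsupp.single (a (m / 2)) 1 + Finsupp.single (b (m / 2 + 1)) 1

section JetLeading

variable {R : Type*} [CommRing R]

lemma pos_eq_of_jetLeadExp_ne_zero {m : ℕ} {s : JetVar} (hs : jetLeadExp m s ≠ 0) :
    s.pos = m + 1 := by
  classical
  rw [jetLeadExp] at hs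
  split_ifs at hs with hm
  all_goals
    simp only [Finsupp.add_apply, Finsupp.single_apply] at hs
    rw [Nat.even_iff] at hm
    split_ifs at hs with h1 h2 h2 <;> subst_vars <;> simp only [JetVar.pos] <;> grind

lemma jetLeadExp_ne_zero (m : ℕ) : jetLeadExp m ≠ 0 := by
  rw [jetLeadExp]
  split_ifs <;> simp

lemma disjoint_of_pos_eq {M N : JetVar →₀ ℕ} {i j : ℕ} (hij : i ≠ j)
    (hM : ∀ s, M s ≠ 0 → s.pos = i) (hN : ∀ s, N s ≠ 0 → s.pos = j) : Disjoint M N := by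
  rw [Finsupp.disjoint_iff, Finset.disjoint_left]
  intro s hsM hsN
  exact hij ((hM s (Finsupp.mem_support_iff.1 hsM)).symm.trans
    (hN s (Finsupp.mem_support_iff.1 hsN)))

lemma disjoint_jetLeadExp {m m' : ℕ} (h : m ≠ m') : Disjoint (jetLeadExp m) (jetLeadExp m') :=
  disjoint_of_pos_eq (by simpa using h) (fun _ => pos_eq_of_jetLeadExp_ne_zero)
    fun _ => pos_eq_of_jetLeadExp_ne_zero

lemma disjoint_jetLeadExp_single_b_zero (m : ℕ) :
    Disjoint (jetLeadExp m) (Finsupp.single (b 0) 1) := by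
  refine disjoint_of_pos_eq (Nat.succ_ne_zero m) (fun _ => pos_eq_of_jetLeadExp_ne_zero)
    fun s hs => ?_
  rw [Finsupp.single_apply_ne_zero.1 hs |>.1]
  rfl

lemma weight_add_weight_lt {m n : ℕ} (hmn : m ≤ n) {s t s' t' : JetVar}
    (hst : s.pos + t.pos = 2 * m + 2) (hne : s.pos ≠ t.pos) (hs' : s'.pos = m + 1)
    (ht' : t'.pos = m + 1) : weight n s + weight n t < weight n s' + weight n t' := by
  simp only [JetVar.weight, hs', ht']
  have hs : s.pos ^ 2 ≤ (2 * n + 2) ^ 2 := Nat.pow_le_pow_left (by omega) 2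
  have ht : t.pos ^ 2 ≤ (2 * n + 2) ^ 2 := Nat.pow_le_pow_left (by omega) 2
  have hm : (m + 1) ^ 2 ≤ (2 * n + 2) ^ 2 := Nat.pow_le_pow_left (by omega) 2
  have hconc : 2 * (m + 1) ^ 2 < s.pos ^ 2 + t.pos ^ 2 := by
    zify at hst hne ⊢
    nlinarith [sq_pos_of_ne_zero (sub_ne_zero.2 hne)]
  omega

lemma X_mul_X_mem_weightLT {σ : Type*} {w : σ → ℕ} {s t : σ} {D : ℕ} (h : w s + w t < D) :
    (MvPolynomial.X s * MvPolynomial.X t : MvPolynomial σ R) ∈ weightLT R w D := by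
  rw [MvPolynomial.X, MvPolynomial.X, MvPolynomial.monomial_mul]
  exact monomial_mem_weightLT (by simpa [Finsupp.weight_single] using h) _

lemma hasLeadingMonomial_sum_X_mul_X {ι σ : Type*} {w : σ → ℕ} {s t : ι → σ} {S : Finset ι}
    {i : ι} (hi : i ∈ S) {q : MvPolynomial σ R} (hq : q ∈ weightLT R w (w (s i) + w (t i)))
    (hlt : ∀ j ∈ S, j ≠ i → w (s j) + w (t j) < w (s i) + w (t i)) :
    HasLeadingMonomial w (∑ j ∈ S, MvPolynomial.X (s j) * MvPolynomial.X (t j) + q)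
      (Finsupp.single (s i) 1 + Finsupp.single (t i) 1) := by
  classical
  have hweight : Finsupp.weight w (Finsupp.single (s i) 1 + Finsupp.single (t i) 1) =
      w (s i) + w (t i) := by simp [Finsupp.weight_single]
  have hX : (MvPolynomial.X (s i) * MvPolynomial.X (t i) : MvPolynomial σ R) =
      MvPolynomial.monomial (Finsupp.single (s i) 1 + Finsupp.single (t i) 1) 1 := by
    rw [MvPolynomial.X, MvPolynomial.X, MvPolynomial.monomial_mul, one_mul]
  rw [HasLeadingMonomial, hweight, ← Finset.add_sum_erase S _ hi, hX, add_assoc,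
    add_sub_cancel_left]
  refine add_mem (sum_mem fun j hj => ?_) hq
  exact X_mul_X_mem_weightLT (hlt j (Finset.mem_of_mem_erase hj) (Finset.ne_of_mem_erase hj))

theorem hasLeadingMonomial_jetEq {m n : ℕ} (hmn : m ≤ n) :
    HasLeadingMonomial (weight n) (jetEq R m) (jetLeadExp m) := by
  rw [jetEq, Finset.sum_add_distrib, jetLeadExp]
  split_ifs with hm
  · rw [Nat.even_iff] at hm
    rw [add_comm]
    refine hasLeadingMonomial_sum_X_mul_X (s := fun ij : ℕ × ℕ => g ij.1) (t := fun ij => h ij.2)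
      (i := (m / 2, m / 2)) (mem_antidiagonal.2 (by omega)) ?_ ?_
    · refine sum_mem fun ij hij => X_mul_X_mem_weightLT ?_
      rw [mem_antidiagonal] at hij
      apply weight_add_weight_lt hmn <;> simp only [JetVar.pos] <;> omega
    · rintro ⟨i, j⟩ hij hne
      rw [mem_antidiagonal] at hij
      rw [Ne, Prod.mk.injEq] at hne
      apply weight_add_weight_lt hmn <;> simp only [JetVar.pos] <;> omega
  · rw [Nat.even_iff] at hm
    refine hasLeadingMonomial_sum_X_mul_X (s := fun ij : ℕ × ℕ => a ij.1) (t := fun ij => b ij.2)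
      (i := (m / 2, m / 2 + 1)) (mem_antidiagonal.2 (by omega)) ?_ ?_
    · refine sum_mem fun ij hij => X_mul_X_mem_weightLT ?_
      rw [mem_antidiagonal] at hij
      apply weight_add_weight_lt hmn <;> simp only [JetVar.pos] <;> omega
    · rintro ⟨i, j⟩ hij hne
      rw [mem_antidiagonal] at hij
      rw [Ne, Prod.mk.injEq] at hne
      apply weight_add_weight_lt hmn <;> simp only [JetVar.pos] <;> omega

theorem mem_span_jetEq_of_X_b_zero_mul_mem {n : ℕ} {p : MvPolynomial JetVar R}
    (hp : MvPolynomial.X (b 0) * p ∈ Ideal.span (jetEq R '' Set.Iic n)) :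
    p ∈ Ideal.span (jetEq R '' Set.Iic n) := by
  rw [Set.image_eq_range] at hp ⊢
  exact mem_span_of_monomial_mul_mem (M := fun m : Set.Iic n => jetLeadExp m)
    (fun m => jetLeadExp_ne_zero m)
    (fun _ _ hne => disjoint_jetLeadExp (Subtype.coe_injective.ne hne))
    (fun m => hasLeadingMonomial_jetEq m.2) (fun m => disjoint_jetLeadExp_single_b_zero m) hp

end JetLeading

section GenericPoint

variable {R K : Type*} [CommRing R] [Field K] [Algebra R K] {x : JetVar → K} {n : ℕ}

lemma neg_mul_inv_mul_add_cancel {B : PowerSeries K} (hB : PowerSeries.constantCoeff B ≠ 0)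
    (C : PowerSeries K) : -C * B⁻¹ * B + C = 0 := by
  rw [mul_assoc, PowerSeries.inv_mul_cancel B hB, mul_one, neg_add_cancel]

/-- The point of the zero locus of `jetEq R 0, …, jetEq R n` with the same coordinates as `x`,
except that those along `a 0, …, a n` are read off from `a(t) = - g(t) * h(t) / b(t)`. When
`x (b 0) = 0`, the inverse is a junk value. -/
def solveJet (n : ℕ) (x : JetVar → K) : JetVar → K
  | a i =>
      if i ≤ n then
        PowerSeries.coeff i (-(PowerSeries.mk (fun i => x (g i)) *
          PowerSeries.mk fun i => x (h i)) * (PowerSeries.mk fun i => x (b i))⁻¹)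
      else x (a i)
  | s => x s

lemma solveJet_of_forall_ne {s : JetVar} (hs : ∀ i ≤ n, s ≠ a i) : solveJet n x s = x s := by
  cases s with
  | a i => exact if_neg fun hi => hs i hi rfl
  | _ => rfl

lemma aeval_solveJet_jetEq (hx : x (b 0) ≠ 0) {m : ℕ} (hm : m ≤ n) :
    MvPolynomial.aeval (solveJet n x) (jetEq R m) = 0 := by
  have hB : PowerSeries.constantCoeff (PowerSeries.mk fun i => x (b i)) ≠ 0 := by
    rwa [← PowerSeries.coeff_zero_eq_constantCoeff_apply, PowerSeries.coeff_mk]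
  have hcoeff := congrArg (PowerSeries.coeff m) (neg_mul_inv_mul_add_cancel hB
    (PowerSeries.mk (fun i => x (g i)) * PowerSeries.mk fun i => x (h i)))
  rw [map_add, PowerSeries.coeff_mul, PowerSeries.coeff_mul, ← Finset.sum_add_distrib,
    map_zero] at hcoeff
  rw [jetEq, map_sum, ← hcoeff]
  refine Finset.sum_congr rfl fun ij hij => ?_
  have hi : ij.1 ≤ n := (antidiagonal.fst_le hij).trans hm
  simp only [map_add, map_mul, MvPolynomial.aeval_X, solveJet, if_pos hi, PowerSeries.coeff_mk]

lemma injOn_aeval_solveJet [Algebra (MvPolynomial JetVar R) K]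
    [IsScalarTower R (MvPolynomial JetVar R) K] [FaithfulSMul (MvPolynomial JetVar R) K] :
    Set.InjOn (MvPolynomial.aeval (R := R) (solveJet n fun s =>
        algebraMap (MvPolynomial JetVar R) K (MvPolynomial.X s)))
      (MvPolynomial.supported R {s | ∀ i ≤ n, s ≠ a i}) := by
  have heq : Set.EqOn (MvPolynomial.aeval (R := R) (solveJet n fun s =>
        algebraMap (MvPolynomial JetVar R) K (MvPolynomial.X s)))
      (Algebra.algHom R (MvPolynomial JetVar R) K)
      (MvPolynomial.supported R {s | ∀ i ≤ n, s ≠ a i}) := by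
    refine AlgHom.adjoin_le_equalizer _ _ ?_
    rintro _ ⟨s, hs, rfl⟩
    rw [MvPolynomial.aeval_X, solveJet_of_forall_ne hs]
    rfl
  exact heq.injOn_iff.2 (FaithfulSMul.algebraMap_injective _ _).injOn

end GenericPoint

section JetPrime

variable {R : Type*} [CommRing R]

lemma X_b_zero_mul_X_a (i : ℕ) :
    (MvPolynomial.X (b 0) * MvPolynomial.X (a i) : MvPolynomial JetVar R) =
      jetEq R i - (∑ ij ∈ (antidiagonal i).erase (i, 0),
        MvPolynomial.X (a ij.1) * MvPolynomial.X (b ij.2) +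
        ∑ ij ∈ antidiagonal i, MvPolynomial.X (g ij.1) * MvPolynomial.X (h ij.2)) := by
  rw [jetEq, Finset.sum_add_distrib, ← Finset.add_sum_erase _ _ (a := (i, 0)) (by simp)]
  ring

theorem saturation_eq_top_of_X_mem {n : ℕ}
    {S : Subalgebra R (MvPolynomial JetVar R ⧸ Ideal.span (jetEq R '' Set.Iic n))}
    {M : Submonoid (MvPolynomial JetVar R ⧸ Ideal.span (jetEq R '' Set.Iic n))}
    {hM : M ≤ S.toSubmonoid} (hb : Ideal.Quotient.mkₐ R _ (MvPolynomial.X (b 0)) ∈ M)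
    (hS : ∀ s, (∀ i ≤ n, s ≠ a i) → Ideal.Quotient.mkₐ R _ (MvPolynomial.X s) ∈ S) :
    S.saturation M hM = ⊤ := by
  set mk := Ideal.Quotient.mkₐ R (Ideal.span (jetEq R '' Set.Iic n))
  have hfree (s : JetVar) (hs : ∀ i ≤ n, s ≠ a i) : mk (MvPolynomial.X s) ∈ S.saturation M hM :=
    Subalgebra.le_saturation (hS s hs)
  have hbound (i : ℕ) (hi : i ≤ n) : mk (MvPolynomial.X (a i)) ∈ S.saturation M hM := by
    induction i using Nat.strong_induction_on with
    | _ i ih =>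
      refine Subalgebra.mem_saturation_of_mul_mem_left ?_ hb
      have hzero : mk (jetEq R i) = 0 :=
        Ideal.Quotient.eq_zero_iff_mem.2 (Ideal.subset_span ⟨i, hi, rfl⟩)
      rw [← map_mul, X_b_zero_mul_X_a, map_sub, hzero, zero_sub]
      simp only [map_add, map_sum, map_mul]
      refine neg_mem (add_mem (sum_mem fun ij hij => ?_) (sum_mem fun _ _ => ?_))
      · obtain ⟨hne, hsum⟩ := Finset.mem_erase.1 hij
        rw [mem_antidiagonal] at hsum
        have hlt : ij.1 < i := by
          rw [Ne, Prod.ext_iff] at hne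
          simp only at hne
          omega
        exact mul_mem (ih _ hlt (by omega)) (hfree _ (by simp))
      · exact mul_mem (hfree _ (by simp)) (hfree _ (by simp))
  have htop : Algebra.adjoin R (Set.range MvPolynomial.X) ≤ (S.saturation M hM).comap mk := by
    refine Algebra.adjoin_le ?_
    rintro _ ⟨s, rfl⟩
    by_cases hs : ∀ i ≤ n, s ≠ a i
    · exact hfree s hs
    · push Not at hs
      obtain ⟨i, hi, rfl⟩ := hs
      exact hbound i hi
  refine Algebra.eq_top_iff.2 fun x => ?_
  obtain ⟨p, rfl⟩ := Ideal.Quotient.mkₐ_surjective R _ x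
  rw [MvPolynomial.adjoin_range_X] at htop
  exact htop Algebra.mem_top

theorem isPrime_span_jetEq (R : Type*) [CommRing R] [IsDomain R] (n : ℕ) :
    (Ideal.span (jetEq R '' Set.Iic n)).IsPrime := by
  have hyT : (MvPolynomial.X (b 0) : MvPolynomial JetVar R) ∈
      MvPolynomial.supported R {s | ∀ i ≤ n, s ≠ a i} :=
    MvPolynomial.X_mem_supported.2 (by simp)
  refine isPrime_of_saturation_eq_top hyT
    (fun _ => mem_span_jetEq_of_X_b_zero_mul_mem)
    (MvPolynomial.aeval (solveJet n fun s =>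
      algebraMap _ (FractionRing (MvPolynomial JetVar R)) (MvPolynomial.X s))) ?_
    injOn_aeval_solveJet (saturation_eq_top_of_X_mem (Submonoid.mem_powers _) fun s hs => ?_)
  · rw [Ideal.span_le]
    rintro _ ⟨m, hm, rfl⟩
    refine aeval_solveJet_jetEq ?_ hm
    exact (map_ne_zero_iff _ (IsFractionRing.injective _ _)).2 (MvPolynomial.X_ne_zero _)
  · exact ⟨_, MvPolynomial.X_mem_supported.2 hs, rfl⟩

end JetPrime

section AlmostCommuting

variable {F : Type*} [Field F] {u r k l : ℕ}

lemma Av_succ (i : Fin (u - 1)) : Av F u r (i + 1) = MvPolynomial.X (Sum.inl i) :=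
  dif_pos i.2

lemma Bv_succ (i : Fin (u - r - 1)) : Bv F u r (i + 1) = MvPolynomial.X (Sum.inr (Sum.inl i)) :=
  dif_pos i.2

lemma Gv_coe (i : Fin (u - r)) : Gv F u r i = MvPolynomial.X (Sum.inr (Sum.inr (Sum.inl i))) :=
  dif_pos i.2

lemma Hv_coe (i : Fin (u - r)) : Hv F u r i = MvPolynomial.X (Sum.inr (Sum.inr (Sum.inr i))) :=
  dif_pos i.2

lemma Eset_eq_X_image (hru : r < u) (hl2 : l ≤ u - r) (hkl : k + l ≤ r) :
    Eset F u r k l = MvPolynomial.X '' (Sum.inl '' {i : Fin (u - 1) | (i : ℕ) + 1 < k} ∪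
      Sum.inr '' (Sum.inl '' {i : Fin (u - r - 1) | (i : ℕ) + 1 < l})) := by
  rw [Eset, if_pos hkl, Set.image_union]
  congr 1 <;> ext p
  · constructor
    · rintro ⟨i, h1, h2, rfl⟩
      obtain ⟨i, rfl⟩ := Nat.exists_eq_add_of_le' h1
      exact ⟨_, ⟨⟨i, by omega⟩, Nat.lt_of_le_sub_one (by omega) h2, rfl⟩, (Av_succ _).symm⟩
    · rintro ⟨_, ⟨i, hi, rfl⟩, rfl⟩
      exact ⟨i + 1, by omega, Nat.le_sub_one_of_lt hi, (Av_succ i).symm⟩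
  · constructor
    · rintro ⟨i, h1, h2, rfl⟩
      obtain ⟨i, rfl⟩ := Nat.exists_eq_add_of_le' h1
      exact ⟨_, ⟨_, ⟨⟨i, by omega⟩, Nat.lt_of_le_sub_one (by omega) h2, rfl⟩, rfl⟩,
        (Bv_succ _).symm⟩
    · rintro ⟨_, ⟨_, ⟨i, hi, rfl⟩, rfl⟩, rfl⟩
      exact ⟨i + 1, by omega, Nat.le_sub_one_of_lt hi, (Bv_succ i).symm⟩

variable (F u r k)

/-- Kills the variables `a_i` with `i < k` and `b_i` with `i < r - k`, shifts the indices of the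
other `a_i` and `b_i` down to start at `0`, and changes the sign of the `g_i`. This takes the
quadratic elements of `Eset F u r k l` to the polynomials `jetEq F m`. -/
def toJet : MvPolynomial (Vars u r) F →ₐ[F] MvPolynomial JetVar F :=
  MvPolynomial.aeval (Sum.elim
    (fun i => if (i : ℕ) + 1 < k then 0 else MvPolynomial.X (a (i + 1 - k)))
    (Sum.elim
      (fun i => if (i : ℕ) + 1 < r - k then 0 else MvPolynomial.X (b (i + 1 - (r - k))))
      (Sum.elim (fun i => -MvPolynomial.X (g i)) fun i => MvPolynomial.X (h i))))

/-- A one-sided inverse of `toJet F u r k` modulo the variables that `toJet F u r k` kills. -/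
def ofJet : MvPolynomial JetVar F →ₐ[F] MvPolynomial (Vars u r) F :=
  MvPolynomial.aeval fun
    | a i => Av F u r (k + i)
    | b i => Bv F u r (r - k + i)
    | g i => -Gv F u r i
    | h i => Hv F u r i

variable {F u r k}

lemma toJet_Av_of_lt {i : ℕ} (h1 : 1 ≤ i) (hi : i < k) : toJet F u r k (Av F u r i) = 0 := by
  rw [Av]
  split_ifs
  · simp [toJet, Nat.sub_add_cancel h1, hi]
  · exact map_zero _

lemma toJet_Bv_of_lt {i : ℕ} (h1 : 1 ≤ i) (hi : i < r - k) : toJet F u r k (Bv F u r i) = 0 := by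
  rw [Bv]
  split_ifs
  · simp [toJet, Nat.sub_add_cancel h1, hi]
  · exact map_zero _

lemma toJet_Av {i : ℕ} (hk : 1 ≤ k) (hi : k + i < u) :
    toJet F u r k (Av F u r (k + i)) = MvPolynomial.X (a i) := by
  rw [Av, dif_pos (by omega)]
  simp [toJet, show k + i - 1 + 1 = k + i by omega]

lemma toJet_Bv {i : ℕ} (hk : k < r) (hi : r - k + i < u - r) :
    toJet F u r k (Bv F u r (r - k + i)) = MvPolynomial.X (b i) := by
  rw [Bv, dif_pos (by omega)]
  simp [toJet, show r - k + i - 1 + 1 = r - k + i by omega]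

lemma toJet_Gv {i : ℕ} (hi : i < u - r) : toJet F u r k (Gv F u r i) = -MvPolynomial.X (g i) := by
  rw [Gv, dif_pos hi]
  simp [toJet]

lemma toJet_Hv {i : ℕ} (hi : i < u - r) : toJet F u r k (Hv F u r i) = MvPolynomial.X (h i) := by
  rw [Hv, dif_pos hi]
  simp [toJet]

lemma ofJet_jetEq (m : ℕ) : ofJet F u r k (jetEq F m) =
    (∑ j ∈ Finset.range (m + 1), Av F u r (k + j) * Bv F u r (r - k + m - j)) -
      (∑ j ∈ Finset.range (m + 1), Gv F u r j * Hv F u r (m - j)) := by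
  rw [jetEq, Finset.Nat.sum_antidiagonal_eq_sum_range_succ_mk, map_sum, ← Finset.sum_sub_distrib]
  refine Finset.sum_congr rfl fun j hj => ?_
  rw [Nat.add_sub_assoc (Nat.lt_succ_iff.1 (Finset.mem_range.1 hj))]
  simp [ofJet, sub_eq_add_neg]

lemma toJet_ofJet_jetEq {n m : ℕ} (hm : m ≤ n) (hk : 1 ≤ k) (hkr : k < r) (hkn : k + n < u)
    (hbn : r - k + n < u - r) : toJet F u r k (ofJet F u r k (jetEq F m)) = jetEq F m := by
  rw [jetEq, map_sum, map_sum]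
  refine Finset.sum_congr rfl fun ij hij => ?_
  rw [mem_antidiagonal] at hij
  simp only [ofJet, map_add, map_mul, MvPolynomial.aeval_X, map_neg]
  rw [toJet_Av hk (by omega), toJet_Bv hkr (by omega), toJet_Gv (by omega), toJet_Hv (by omega),
    neg_neg]

lemma X_sub_ofJet_toJet_mem (hkl : ¬k + l ≤ r) (s : Vars u r) :
    MvPolynomial.X s - ofJet F u r k (toJet F u r k (MvPolynomial.X s)) ∈
      Ideal.span (Eset F u r k l) := by
  rw [Eset, if_neg hkl]
  rcases s with i | i | i | i
  · by_cases hi : (i : ℕ) + 1 < k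
    · rw [toJet, MvPolynomial.aeval_X, Sum.elim_inl, if_pos hi, map_zero, sub_zero, ← Av_succ]
      exact Ideal.subset_span (Or.inl (Or.inl ⟨i + 1, by omega, by omega, rfl⟩))
    · simp [toJet, ofJet, hi, Nat.add_sub_cancel' (not_lt.1 hi), Av_succ]
  · by_cases hi : (i : ℕ) + 1 < r - k
    · rw [toJet, MvPolynomial.aeval_X, Sum.elim_inr, Sum.elim_inl, if_pos hi, map_zero, sub_zero,
        ← Bv_succ]
      exact Ideal.subset_span (Or.inl (Or.inr ⟨i + 1, by omega, by omega, rfl⟩))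
    · simp [toJet, ofJet, hi, Nat.add_sub_cancel' (not_lt.1 hi), Bv_succ]
  · simp [toJet, ofJet, Gv_coe]
  · simp [toJet, ofJet, Hv_coe]

theorem isPrime_span_Eset_of_lt (hk1 : 1 ≤ k) (hk2 : k ≤ r - 1) (hl2 : l ≤ u - r)
    (hkl : ¬k + l ≤ r) : (Ideal.span (Eset F u r k l)).IsPrime := by
  refine isPrime_of_sub_mem (isPrime_span_jetEq F (k + l - r - 1)) (toJet F u r k)
    (ofJet F u r k) ?_ ?_ (sub_mem_of_forall_X_sub_mem ((ofJet F u r k).comp (toJet F u r k))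
      (X_sub_ofJet_toJet_mem hkl))
  · rw [Ideal.span_le, Eset, if_neg hkl]
    rintro _ ((⟨i, h1, h2, rfl⟩ | ⟨i, h1, h2, rfl⟩) | ⟨m, hm, rfl⟩)
    · rw [SetLike.mem_coe, Ideal.mem_comap, toJet_Av_of_lt h1 (by omega)]
      exact zero_mem _
    · rw [SetLike.mem_coe, Ideal.mem_comap, toJet_Bv_of_lt h1 (by omega)]
      exact zero_mem _
    · rw [← ofJet_jetEq, SetLike.mem_coe, Ideal.mem_comap,
        toJet_ofJet_jetEq hm hk1 (by omega) (by omega) (by omega)]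
      exact Ideal.subset_span ⟨m, hm, rfl⟩
  · rw [Ideal.span_le, Eset, if_neg hkl]
    rintro _ ⟨m, hm, rfl⟩
    exact Ideal.subset_span (Or.inr ⟨m, hm, ofJet_jetEq m⟩)

theorem statement1_general (F : Type*) [Field F] (u r k l : ℕ)
    (hru : r < u) (hk1 : 1 ≤ k) (hk2 : k ≤ r - 1) (hl2 : l ≤ u - r) :
    (Ideal.span (Eset F u r k l)).IsPrime := by
  by_cases hkl : k + l ≤ r
  · rw [Eset_eq_X_image hru hl2 hkl]
    exact isPrime_span_X_image _
  · exact isPrime_span_Eset_of_lt hk1 hk2 hl2 hkl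

end AlmostCommuting

end

/-- The ideal generated by `E^Q_{k,l}` in the polynomial ring
`F[a_1,…,a_{u−1}, b_1,…,b_{u−r−1}, g_0,…,g_{u−r−1}, h_0,…,h_{u−r−1}]` is prime. -/
theorem statement1 (F : Type*) [Field F] [Infinite F] (u r k l : ℕ)
    (hru : r < u) (hr : 2 ≤ r) (hk1 : 1 ≤ k) (hk2 : k ≤ r - 1)
    (hl1 : 1 ≤ l) (hl2 : l ≤ u - r) :
    (Ideal.span (Eset F u r k l)).IsPrime :=
  statement1_general F u r k l hru hk1 hk2 hl2
end
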